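/- arXiv:1804.10573 — 2 statements merged into one kernel-verified Lean document; each statement's English description precedes it below -/
import Mathlib

section
/- (Condition M is open) If ν is a non-pure mixture satisfying Condition M, then there exists δ > 0 such that every mixture ν̄ with ‖ν̄ − ν‖ < δ also satisfies Condition M. -/
open MeasureTheory ProbabilityTheory Real Filter Set Matrix
open scoped ENNReal

noncomputable section

namespace SpinGlass


/-- Coefficient decay: `limsup p⁻¹ log γ_p < 0`. -/
def GammaDecay (γ : ℕ → ℝ) : Prop :=
  (∀ p, 0 ≤ γ p) ∧ ∃ ρ : ℝ, 0 < ρ ∧ ρ < 1 ∧ ∀ᶠ p in atTop, γ p ≤ ρ ^ p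

/-- ν(x) = Σ_{p≥2} γ_p² xᵖ. -/
def nuF (γ : ℕ → ℝ) (x : ℝ) : ℝ := ∑' p : ℕ, if 2 ≤ p then γ p ^ 2 * x ^ p else 0

/-- ν′(x), termwise. -/
def nuD1 (γ : ℕ → ℝ) (x : ℝ) : ℝ :=
  ∑' p : ℕ, if 2 ≤ p then γ p ^ 2 * p * x ^ (p - 1) else 0

/-- ν″(x), termwise. -/
def nuD2 (γ : ℕ → ℝ) (x : ℝ) : ℝ :=
  ∑' p : ℕ, if 2 ≤ p then γ p ^ 2 * p * ((p : ℝ) - 1) * x ^ (p - 2) else 0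

/-- ν is mixed (not a monomial). -/
def Mixed (γ : ℕ → ℝ) : Prop :=
  ∃ p q : ℕ, 2 ≤ p ∧ 2 ≤ q ∧ p ≠ q ∧ γ p ≠ 0 ∧ γ q ≠ 0

/-- The logarithmic potential Ω of the semicircle law. -/
def Omega (x : ℝ) : ℝ :=
  if |x| ≤ 2 then x ^ 2 / 4 - 1 / 2
  else x ^ 2 / 4 - 1 / 2 -
    (|x| / 4 * Real.sqrt (x ^ 2 - 4) - Real.log (Real.sqrt (x ^ 2 / 4 - 1) + |x| / 2))

/-- The 2×2 covariance matrix Σ_q. -/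
def SigmaQ (γ : ℕ → ℝ) (q : ℝ) : Matrix (Fin 2) (Fin 2) ℝ :=
  !![nuF γ (q ^ 2), q ^ 2 * nuD1 γ (q ^ 2);
     q ^ 2 * nuD1 γ (q ^ 2), q ^ 4 * nuD2 γ (q ^ 2) + q ^ 2 * nuD1 γ (q ^ 2)]

/-- The complexity function Θ_{ν,q}(u,x). -/
def Theta (γ : ℕ → ℝ) (q u x : ℝ) : ℝ :=
  1 / 2 + 1 / 2 * Real.log (q ^ 2 * nuD2 γ (q ^ 2) / nuD1 γ (q ^ 2))
    - 1 / 2 * (![u, x] ⬝ᵥ ((SigmaQ γ q)⁻¹ *ᵥ ![u, x]))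
    + Omega (x / (q * Real.sqrt (nuD2 γ (q ^ 2))))

/-- −E₀(ν) is the minimal E with sup_x Θ_{ν,1}(E,x) = 0. -/
def E0 (γ : ℕ → ℝ) : ℝ := - sInf {E : ℝ | (⨆ x : ℝ, Theta γ 1 E x) = 0}

/-- −x₀(ν) is the (unique) maximizer of x ↦ Θ_{ν,1}(−E₀(ν),x). -/
def x0 (γ : ℕ → ℝ) : ℝ :=
  - sSup {x : ℝ | ∀ y : ℝ, Theta γ 1 (-(E0 γ)) y ≤ Theta γ 1 (-(E0 γ)) x}

/-- The coefficients of ν_q(x) = Σ γ_p² q^{2p} xᵖ. -/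
def gammaScale (γ : ℕ → ℝ) (q : ℝ) : ℕ → ℝ := fun p => γ p * q ^ p

def E0q (γ : ℕ → ℝ) (q : ℝ) : ℝ := E0 (gammaScale γ q)

def x0q (γ : ℕ → ℝ) (q : ℝ) : ℝ := q⁻¹ * x0 (gammaScale γ q)

/-- d(r,q₁,q₂) = rν′(q₁q₂r) − q₁q₂ν″(q₁q₂r)(1−r²). -/
def dA (γ : ℕ → ℝ) (r q1 q2 : ℝ) : ℝ :=
  r * nuD1 γ (q1 * q2 * r) - q1 * q2 * nuD2 γ (q1 * q2 * r) * (1 - r ^ 2)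

def a2 (γ : ℕ → ℝ) (r q1 q2 : ℝ) : ℝ :=
  nuD1 γ (q2 ^ 2) / (nuD1 γ (q1 ^ 2) * nuD1 γ (q2 ^ 2) - dA γ r q1 q2 ^ 2)

def a4 (γ : ℕ → ℝ) (r q1 q2 : ℝ) : ℝ :=
  -dA γ r q1 q2 / (nuD1 γ (q1 ^ 2) * nuD1 γ (q2 ^ 2) - dA γ r q1 q2 ^ 2)

/-- υ(r,q₁,q₂) = q₁q₂rν″(q₁q₂r) + ν′(q₁q₂r). -/
def ups (γ : ℕ → ℝ) (r q1 q2 : ℝ) : ℝ :=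
  q1 * q2 * r * nuD2 γ (q1 * q2 * r) + nuD1 γ (q1 * q2 * r)

def SigmaU (γ : ℕ → ℝ) (r q1 q2 : ℝ) : Matrix (Fin 2) (Fin 2) ℝ :=
  !![nuF γ (q1 ^ 2) - q1 ^ 2 * a2 γ r q2 q1 * nuD1 γ (q1 * q2 * r) ^ 2 * (1 - r ^ 2),
     nuF γ (q1 * q2 * r) + q1 * q2 * a4 γ r q1 q2 * nuD1 γ (q1 * q2 * r) ^ 2 * (1 - r ^ 2);
     nuF γ (q1 * q2 * r) + q1 * q2 * a4 γ r q1 q2 * nuD1 γ (q1 * q2 * r) ^ 2 * (1 - r ^ 2),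
     nuF γ (q2 ^ 2) - q2 ^ 2 * a2 γ r q1 q2 * nuD1 γ (q1 * q2 * r) ^ 2 * (1 - r ^ 2)]

def SigmaX (γ : ℕ → ℝ) (r q1 q2 : ℝ) : Matrix (Fin 2) (Fin 2) ℝ :=
  !![q1 ^ 2 * nuD2 γ (q1 ^ 2) + nuD1 γ (q1 ^ 2)
        - ups γ r q1 q2 ^ 2 * (1 - r ^ 2) * a2 γ r q2 q1,
     q1 * q2 * r ^ 2 * nuD2 γ (q1 * q2 * r) + r * nuD1 γ (q1 * q2 * r)
        + ups γ r q1 q2 ^ 2 * (1 - r ^ 2) * a4 γ r q1 q2;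
     q1 * q2 * r ^ 2 * nuD2 γ (q1 * q2 * r) + r * nuD1 γ (q1 * q2 * r)
        + ups γ r q1 q2 ^ 2 * (1 - r ^ 2) * a4 γ r q1 q2,
     q2 ^ 2 * nuD2 γ (q2 ^ 2) + nuD1 γ (q2 ^ 2)
        - ups γ r q1 q2 ^ 2 * (1 - r ^ 2) * a2 γ r q1 q2]

def SigmaB (γ : ℕ → ℝ) (r q1 q2 : ℝ) : Matrix (Fin 2) (Fin 2) ℝ :=
  !![q1 * nuD1 γ (q1 ^ 2)
        - q1 * (1 - r ^ 2) * nuD1 γ (q1 * q2 * r) * ups γ r q1 q2 * a2 γ r q2 q1,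
     q1 * r * nuD1 γ (q1 * q2 * r)
        + q1 * (1 - r ^ 2) * nuD1 γ (q1 * q2 * r) * ups γ r q1 q2 * a4 γ r q1 q2;
     q2 * r * nuD1 γ (q1 * q2 * r)
        + q2 * (1 - r ^ 2) * nuD1 γ (q1 * q2 * r) * ups γ r q2 q1 * a4 γ r q2 q1,
     q2 * nuD1 γ (q2 ^ 2)
        - q2 * (1 - r ^ 2) * nuD1 γ (q1 * q2 * r) * ups γ r q2 q1 * a2 γ r q1 q2]

/-- The 4×4 covariance matrix Σ_{U,X}(r,q₁,q₂), as a block matrix. -/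
def SigmaUX (γ : ℕ → ℝ) (r q1 q2 : ℝ) :
    Matrix (Fin 2 ⊕ Fin 2) (Fin 2 ⊕ Fin 2) ℝ :=
  Matrix.fromBlocks (SigmaU γ r q1 q2) (SigmaB γ r q1 q2)
    (SigmaB γ r q1 q2)ᵀ (SigmaX γ r q1 q2)

/-- The pair complexity Ψ_{ν,q₁,q₂}(r,u₁,u₂,x₁,x₂). -/
def Psi (γ : ℕ → ℝ) (q1 q2 r u1 u2 x1 x2 : ℝ) : ℝ :=
  1 + 1 / 2 * Real.log ((1 - r ^ 2) *
        (q1 ^ 2 * q2 ^ 2 * nuD2 γ (q1 ^ 2) * nuD2 γ (q2 ^ 2)) /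
        (nuD1 γ (q1 ^ 2) * nuD1 γ (q2 ^ 2) - nuD1 γ (q1 * q2 * r) ^ 2))
    - 1 / 2 * ((Sum.elim ![u1, u2] ![x1, x2]) ⬝ᵥ
        ((SigmaUX γ r q1 q2)⁻¹ *ᵥ (Sum.elim ![u1, u2] ![x1, x2])))
    + Omega (x1 / (q1 * Real.sqrt (nuD2 γ (q1 ^ 2))))
    + Omega (x2 / (q2 * Real.sqrt (nuD2 γ (q2 ^ 2))))

/-- Ψ⁰_ν(r). -/
def Psi0 (γ : ℕ → ℝ) (r : ℝ) : ℝ :=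
  Psi γ 1 1 r (-(E0 γ)) (-(E0 γ)) (-(x0 γ)) (-(x0 γ))

/-- G(ν). -/
def Gfun (γ : ℕ → ℝ) : ℝ :=
  Real.log (nuD2 γ 1 / nuD1 γ 1) -
    (nuD2 γ 1 + nuD1 γ 1) * (nuD2 γ 1 * nuF γ 1 + nuD1 γ 1 ^ 2 - nuD1 γ 1 * nuF γ 1) /
      (nuD2 γ 1 * nuD1 γ 1 ^ 2)

/-- ν is pure-like. -/
def PureLike (γ : ℕ → ℝ) : Prop := 0 < Gfun γ

/-- Condition M. -/
def ConditionM (γ : ℕ → ℝ) : Prop :=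
  Mixed γ ∧ PureLike γ ∧
    iteratedDeriv 2 (Psi0 γ) 0 < 0 ∧
    (∀ r ∈ Set.Ioo (-1 : ℝ) 1, r ≠ 0 → Psi0 γ r < Psi0 γ 0) ∧
    Filter.limsup (fun r : ℝ => (Psi0 γ r : EReal)) (nhdsWithin 1 (Set.Ioo (-1 : ℝ) 1))
      < ((Psi0 γ 0 : ℝ) : EReal) ∧
    Filter.limsup (fun r : ℝ => (Psi0 γ r : EReal)) (nhdsWithin (-1) (Set.Ioo (-1 : ℝ) 1))
      < ((Psi0 γ 0 : ℝ) : EReal)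

/-- The norm distance ‖ν̄ − ν‖ = Σ_{p≥2} |γ̄_p² − γ_p²|·p⁴ between two mixtures. -/
def mixDist (γ γ' : ℕ → ℝ) : ℝ :=
  ∑' p : ℕ, if 2 ≤ p then |γ p ^ 2 - γ' p ^ 2| * (p : ℝ) ^ 4 else 0

/-!
For a mixed pure-like `ν` the pair `(E₀, x₀)` is an explicit function of `ν(1)`, `ν′(1)`, `ν″(1)`
and of the root `w < ν′(1) / ν″(1)` of `w - 1 - log w = (ν(1) / ν′(1)) (1 - w)² / w`. The difference
of the two sides changes sign at `w`, so `w` and with it `(E₀, x₀)` depend continuously on `ν`.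

Exchanging the two points diagonalises `Σ_{U,X}`, which gives `Ψ⁰(r) = r² H(r)` for `|r| < 1`, where
`H(r)` is jointly continuous in `(ν, r)` and `(Ψ⁰)″(0) = 2 H(0)`. Near `r = ±1` the dual form of the
Gaussian quadratic form bounds `Ψ⁰` by an explicit function which is negative for every pure-like
mixture, locally uniformly in `ν`; the conditions at `±1` therefore hold automatically. Hence
Condition M amounts to `H < 0` on `(-1, 1)`, and compactness of `[-1, 1]` makes this open.
-/

/-! ### Mixtures as power series -/

lemma tsum_ite_le_eq_tsum_add (f : ℕ → ℝ) (k : ℕ) :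
    ∑' p, (if k ≤ p then f p else 0) = ∑' n, f (n + k) := by
  rw [← (add_left_injective k).tsum_eq (f := fun p => if k ≤ p then f p else 0)]
  · simp
  · intro p hp
    have hkp : k ≤ p := by
      by_contra h
      simp [h] at hp
    exact ⟨p - k, Nat.sub_add_cancel hkp⟩

/-- The power series of `ν⁽ᵏ⁾(r) / r ^ (2 - k)`: dividing out the leading power makes it continuous
and analytic at `r = 0`. -/
def reducedDeriv (γ : ℕ → ℝ) (k : ℕ) (r : ℝ) : ℝ :=
  ∑' n : ℕ, γ (n + 2) ^ 2 * ((n + 2).descFactorial k : ℝ) * r ^ n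

lemma nuF_eq_sq_mul_reducedDeriv (γ : ℕ → ℝ) (r : ℝ) :
    nuF γ r = r ^ 2 * reducedDeriv γ 0 r := by
  rw [nuF, reducedDeriv, tsum_ite_le_eq_tsum_add, ← tsum_mul_left]
  refine tsum_congr fun n => ?_
  rw [Nat.descFactorial_zero, Nat.cast_one]
  ring

lemma nuD1_eq_mul_reducedDeriv (γ : ℕ → ℝ) (r : ℝ) :
    nuD1 γ r = r * reducedDeriv γ 1 r := by
  rw [nuD1, reducedDeriv, tsum_ite_le_eq_tsum_add, ← tsum_mul_left]
  refine tsum_congr fun n => ?_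
  rw [Nat.descFactorial_one, Nat.add_sub_assoc one_le_two]
  ring

lemma cast_descFactorial_add_two_two (n : ℕ) :
    ((n + 2).descFactorial 2 : ℝ) = (n + 2) * (n + 1) := by
  norm_num [Nat.descFactorial]
  ring

lemma nuD2_eq_reducedDeriv (γ : ℕ → ℝ) (r : ℝ) : nuD2 γ r = reducedDeriv γ 2 r := by
  rw [nuD2, reducedDeriv, tsum_ite_le_eq_tsum_add]
  refine tsum_congr fun n => ?_
  rw [cast_descFactorial_add_two_two, Nat.add_sub_cancel]
  push_cast
  ring

lemma mixDist_eq_tsum (γ' γ : ℕ → ℝ) :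
    mixDist γ' γ = ∑' n : ℕ, |γ' (n + 2) ^ 2 - γ (n + 2) ^ 2| * ((n + 2 : ℕ) : ℝ) ^ 4 := by
  rw [mixDist, tsum_ite_le_eq_tsum_add]

lemma mixDist_nonneg (γ' γ : ℕ → ℝ) : 0 ≤ mixDist γ' γ := by
  rw [mixDist_eq_tsum]
  positivity

lemma GammaDecay.summable_sq_mul_pow {γ : ℕ → ℝ} (h : GammaDecay γ) (k : ℕ) :
    Summable fun n : ℕ => γ (n + 2) ^ 2 * ((n + 2 : ℕ) : ℝ) ^ k := by
  obtain ⟨hγ, ρ, hρ, hρ', hle⟩ := h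
  have hgeom : Summable fun p : ℕ => (p : ℝ) ^ k * (ρ ^ 2) ^ p :=
    summable_pow_mul_geometric_of_norm_lt_one k (by
      rw [Real.norm_of_nonneg (by positivity)]
      exact pow_lt_one₀ hρ.le hρ' two_ne_zero)
  refine (summable_nat_add_iff 2 (f := fun p : ℕ => γ p ^ 2 * (p : ℝ) ^ k)).mpr ?_
  refine Summable.of_norm_bounded_eventually_nat hgeom ?_
  filter_upwards [hle] with p hp
  have hsq : γ p ^ 2 ≤ (ρ ^ 2) ^ p := by
    rw [pow_right_comm]
    exact pow_le_pow_left₀ (hγ p) hp 2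
  rw [Real.norm_of_nonneg (by positivity), mul_comm]
  gcongr

lemma abs_mul_descFactorial_mul_pow_le (c : ℝ) (n : ℕ) {k m : ℕ} (hkm : k ≤ m) {r : ℝ}
    (hr : |r| ≤ 1) :
    |c * ((n + 2).descFactorial k : ℝ) * r ^ n| ≤ |c| * ((n + 2 : ℕ) : ℝ) ^ m := by
  have hpow : |r| ^ n ≤ 1 := pow_le_one₀ (abs_nonneg r) hr
  have hdesc : (n + 2).descFactorial k ≤ (n + 2) ^ m :=
    (Nat.descFactorial_le_pow _ _).trans (Nat.pow_le_pow_right (by lia) hkm)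
  calc |c * ((n + 2).descFactorial k : ℝ) * r ^ n|
      = |c| * ((n + 2).descFactorial k : ℝ) * |r| ^ n := by
        rw [abs_mul, abs_mul, abs_pow, Nat.abs_cast]
    _ ≤ |c| * ((n + 2 : ℕ) : ℝ) ^ m * 1 := by
        gcongr
        exact_mod_cast hdesc
    _ = |c| * ((n + 2 : ℕ) : ℝ) ^ m := mul_one _

lemma norm_reducedDeriv_term_le (γ : ℕ → ℝ) (k n : ℕ) {r : ℝ} (hr : |r| ≤ 1) :
    ‖γ (n + 2) ^ 2 * ((n + 2).descFactorial k : ℝ) * r ^ n‖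
      ≤ γ (n + 2) ^ 2 * ((n + 2 : ℕ) : ℝ) ^ k := by
  rw [Real.norm_eq_abs, ← abs_of_nonneg (sq_nonneg (γ (n + 2)))]
  simpa only [abs_abs] using abs_mul_descFactorial_mul_pow_le |γ (n + 2) ^ 2| n (le_refl k) hr

lemma GammaDecay.hasSum_reducedDeriv {γ : ℕ → ℝ} (h : GammaDecay γ) (k : ℕ) {r : ℝ}
    (hr : |r| ≤ 1) :
    HasSum (fun n : ℕ => γ (n + 2) ^ 2 * ((n + 2).descFactorial k : ℝ) * r ^ n)
      (reducedDeriv γ k r) :=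
  (Summable.of_norm_bounded (h.summable_sq_mul_pow k)
    fun n => norm_reducedDeriv_term_le γ k n hr).hasSum

lemma summable_abs_sub_mul_pow {γ γ' : ℕ → ℝ} (h : GammaDecay γ) (h' : GammaDecay γ') (k : ℕ) :
    Summable fun n : ℕ => |γ' (n + 2) ^ 2 - γ (n + 2) ^ 2| * ((n + 2 : ℕ) : ℝ) ^ k := by
  refine ((h'.summable_sq_mul_pow k).sub (h.summable_sq_mul_pow k)).abs.congr fun n => ?_
  rw [← sub_mul, abs_mul, abs_of_nonneg (a := ((n + 2 : ℕ) : ℝ) ^ k) (by positivity)]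

lemma abs_reducedDeriv_sub_le_mixDist {γ γ' : ℕ → ℝ} (h : GammaDecay γ) (h' : GammaDecay γ')
    {k : ℕ} (hk : k ≤ 4) {r : ℝ} (hr : |r| ≤ 1) :
    |reducedDeriv γ' k r - reducedDeriv γ k r| ≤ mixDist γ' γ := by
  have hsub := (h'.hasSum_reducedDeriv k hr).sub (h.hasSum_reducedDeriv k hr)
  rw [mixDist_eq_tsum, ← hsub.tsum_eq, ← Real.norm_eq_abs]
  refine tsum_of_norm_bounded (summable_abs_sub_mul_pow h h' 4).hasSum fun n => ?_
  rw [← sub_mul, ← sub_mul]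
  exact abs_mul_descFactorial_mul_pow_le _ n hk hr

lemma abs_sq_sub_sq_le_mixDist {γ γ' : ℕ → ℝ} (h : GammaDecay γ) (h' : GammaDecay γ') {p : ℕ}
    (hp : 2 ≤ p) : |γ' p ^ 2 - γ p ^ 2| ≤ mixDist γ' γ := by
  obtain ⟨n, rfl⟩ := Nat.exists_eq_add_of_le' hp
  rw [mixDist_eq_tsum]
  refine le_trans ?_ ((summable_abs_sub_mul_pow h h' 4).le_tsum n fun j _ => by positivity)
  exact le_mul_of_one_le_right (abs_nonneg _) (one_le_pow₀ (by norm_cast; lia))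

lemma GammaDecay.continuousOn_reducedDeriv {γ : ℕ → ℝ} (h : GammaDecay γ) (k : ℕ) :
    ContinuousOn (reducedDeriv γ k) (Icc (-1) 1) :=
  continuousOn_tsum (fun n => by fun_prop) (h.summable_sq_mul_pow k)
    fun n _ hr => norm_reducedDeriv_term_le γ k n (abs_le.mpr hr)

lemma GammaDecay.analyticAt_reducedDeriv {γ : ℕ → ℝ} (h : GammaDecay γ) (k : ℕ) :
    AnalyticAt ℝ (reducedDeriv γ k) 0 := by
  set p := FormalMultilinearSeries.ofScalars ℝ
    (fun n => γ (n + 2) ^ 2 * ((n + 2).descFactorial k : ℝ)) with hp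
  have hradius : (1 : NNReal) ≤ p.radius :=
    p.le_radius_of_summable_norm (by
      simpa [hp] using (h.hasSum_reducedDeriv k (r := 1) (by simp)).summable.norm)
  have hsum : p.sum = reducedDeriv γ k := by
    ext r
    simp only [FormalMultilinearSeries.sum, reducedDeriv, hp,
      FormalMultilinearSeries.ofScalars_apply_eq, smul_eq_mul]
  rw [← hsum]
  exact (p.hasFPowerSeriesOnBall (lt_of_lt_of_le (by simp) hradius)).analyticAt

lemma GammaDecay.abs_reducedDeriv_le_reducedDeriv_abs {γ : ℕ → ℝ} (h : GammaDecay γ) (k : ℕ)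
    {r : ℝ} (hr : |r| ≤ 1) : |reducedDeriv γ k r| ≤ reducedDeriv γ k |r| := by
  refine (h.hasSum_reducedDeriv k hr).norm_le_of_bounded
    (h.hasSum_reducedDeriv k ((abs_abs r).trans_le hr)) fun n => ?_
  rw [norm_mul, norm_pow, Real.norm_of_nonneg (by positivity), Real.norm_eq_abs]

lemma GammaDecay.abs_reducedDeriv_le {γ : ℕ → ℝ} (h : GammaDecay γ) (k : ℕ) {r : ℝ}
    (hr : |r| ≤ 1) : |reducedDeriv γ k r| ≤ reducedDeriv γ k 1 := by
  refine (h.hasSum_reducedDeriv k hr).norm_le_of_bounded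
    (h.hasSum_reducedDeriv k (r := 1) (by simp)) fun n => ?_
  rw [norm_mul, norm_pow, Real.norm_of_nonneg (by positivity), one_pow]
  gcongr
  exact pow_le_one₀ (abs_nonneg r) hr

/-- The filter of mixtures `γ'` close to `γ` in `mixDist`. -/
def mixtureNhds (γ : ℕ → ℝ) : Filter (ℕ → ℝ) :=
  comap (fun γ' => mixDist γ' γ) (nhds 0) ⊓ 𝓟 {γ' | GammaDecay γ'}

lemma eventually_mixtureNhds_iff {γ : ℕ → ℝ} {p : (ℕ → ℝ) → Prop} :
    (∀ᶠ γ' in mixtureNhds γ, p γ') ↔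
      ∃ δ > 0, ∀ γ', GammaDecay γ' → mixDist γ' γ < δ → p γ' := by
  simp only [mixtureNhds, eventually_inf_principal, eventually_comap, Metric.eventually_nhds_iff,
    dist_zero_right, Real.norm_eq_abs]
  refine exists_congr fun δ => and_congr_right fun _ => ?_
  constructor
  · exact fun h γ' hγ' hd => h ((abs_of_nonneg (mixDist_nonneg γ' γ)).trans_lt hd) γ' rfl hγ'
  · rintro h _ hd γ' rfl hγ'
    exact h γ' hγ' ((le_abs_self _).trans_lt hd)

lemma eventually_gammaDecay (γ : ℕ → ℝ) : ∀ᶠ γ' in mixtureNhds γ, GammaDecay γ' :=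
  mem_inf_of_right (mem_principal_self _)

lemma tendsto_mixDist (γ : ℕ → ℝ) :
    Tendsto (fun γ' => mixDist γ' γ) (mixtureNhds γ) (nhds 0) :=
  tendsto_comap.mono_left inf_le_left

lemma GammaDecay.pure_le_mixtureNhds {γ : ℕ → ℝ} (h : GammaDecay γ) : pure γ ≤ mixtureNhds γ := by
  have hself : mixDist γ γ = 0 := by simp [mixDist]
  refine le_inf (tendsto_iff_comap.mp ?_) (by simpa using h)
  exact tendsto_pure_left.mpr fun s hs => by simpa only [hself] using mem_of_mem_nhds hs

lemma GammaDecay.tendsto_reducedDeriv {γ : ℕ → ℝ} (h : GammaDecay γ) {k : ℕ} (hk : k ≤ 4) {r : ℝ}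
    (hr : r ∈ Icc (-1) 1) :
    Tendsto (fun q : (ℕ → ℝ) × ℝ => reducedDeriv q.1 k q.2)
      (mixtureNhds γ ×ˢ nhdsWithin r (Icc (-1) 1)) (nhds (reducedDeriv γ k r)) := by
  have hsub : Tendsto (fun q : (ℕ → ℝ) × ℝ => reducedDeriv q.1 k q.2 - reducedDeriv γ k q.2)
      (mixtureNhds γ ×ˢ nhdsWithin r (Icc (-1) 1)) (nhds 0) := by
    refine squeeze_zero_norm' ?_ ((tendsto_mixDist γ).comp tendsto_fst)
    filter_upwards [tendsto_fst.eventually (eventually_gammaDecay γ),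
      tendsto_snd.eventually self_mem_nhdsWithin] with q hq hqr
    exact abs_reducedDeriv_sub_le_mixDist h hq hk (abs_le.mpr hqr)
  have hfixed : Tendsto (fun q : (ℕ → ℝ) × ℝ => reducedDeriv γ k q.2)
      (mixtureNhds γ ×ˢ nhdsWithin r (Icc (-1) 1)) (nhds (reducedDeriv γ k r)) :=
    (h.continuousOn_reducedDeriv k r hr).tendsto.comp tendsto_snd
  simpa only [sub_add_cancel, zero_add] using hsub.add hfixed

lemma GammaDecay.tendsto_reducedDeriv_one {γ : ℕ → ℝ} (h : GammaDecay γ) {k : ℕ} (hk : k ≤ 4) :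
    Tendsto (fun γ' => reducedDeriv γ' k 1) (mixtureNhds γ) (nhds (reducedDeriv γ k 1)) := by
  have hone : (1 : ℝ) ∈ Icc (-1) 1 := by simp
  have hpair : Tendsto (fun γ' : ℕ → ℝ => (γ', (1 : ℝ))) (mixtureNhds γ)
      (mixtureNhds γ ×ˢ nhdsWithin 1 (Icc (-1) 1)) :=
    tendsto_id.prodMk (tendsto_const_pure.mono_right (pure_le_nhdsWithin hone))
  simpa only [Function.comp_def] using (h.tendsto_reducedDeriv hk hone).comp hpair

/-! ### Positivity of the two-point covariance -/

/-- The values `v₀ = ν(1)`, `v₁ = ν′(1)` and `v₂ = ν″(1)`, which determine `Θ_{ν,1}`. -/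
structure EndpointValues where
  v₀ : ℝ
  v₁ : ℝ
  v₂ : ℝ

/-- The data entering the two-point covariance at overlap `r` with `q₁ = q₂ = 1`: the values at `1`
and the reduced values `s₀ = ν(r) / r²`, `s₁ = ν′(r) / r`, `s₂ = ν″(r)`. -/
structure PairValues extends EndpointValues where
  r : ℝ
  s₀ : ℝ
  s₁ : ℝ
  s₂ : ℝ

/-- `EndpointValues` of the mixture with coefficients `γ_p²`. -/
def endpointValues (γ : ℕ → ℝ) : EndpointValues where
  v₀ := reducedDeriv γ 0 1
  v₁ := reducedDeriv γ 1 1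
  v₂ := reducedDeriv γ 2 1

/-- `PairValues` of the mixture with coefficients `γ_p²` at overlap `r`. -/
def pairValues (γ : ℕ → ℝ) (r : ℝ) : PairValues where
  toEndpointValues := endpointValues γ
  r := r
  s₀ := reducedDeriv γ 0 r
  s₁ := reducedDeriv γ 1 r
  s₂ := reducedDeriv γ 2 r

/-- `PairValues` of the pure mixture `x ^ (n + 2)`. -/
def monomialValues (n : ℕ) (r : ℝ) : PairValues where
  v₀ := 1
  v₁ := n + 2
  v₂ := (n + 2) * (n + 1)
  r := r
  s₀ := r ^ n
  s₁ := (n + 2) * r ^ n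
  s₂ := (n + 2) * (n + 1) * r ^ n

/-- Half the variance of `α (U₁ + e U₂) + β (X₁ + e X₂) + t (1 - r²)^(1/2) (∂₁ + e ∂₂)`, where `U`,
`X` and `∂` are the energy, its radial derivative and its derivative towards the other point at two
points of overlap `r`. The signs `e = ±1` give the swap-symmetric and antisymmetric parts. -/
def PairValues.form (P : PairValues) (e α β t : ℝ) : ℝ :=
  α ^ 2 * (P.v₀ + e * (P.r ^ 2 * P.s₀)) + 2 * α * β * (P.v₁ + e * (P.r ^ 2 * P.s₁))
    + β ^ 2 * (P.v₂ + P.v₁ + e * (P.r ^ 2 * P.s₂ + P.r ^ 2 * P.s₁))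
    + e * (2 * t * (1 - P.r ^ 2) * (α * (P.r * P.s₁) + β * (P.r * (P.s₁ + P.s₂))))
    + t ^ 2 * (1 - P.r ^ 2) * (P.v₁ - e * (P.r ^ 2 * P.s₁ - (1 - P.r ^ 2) * P.s₂))

lemma PairValues.form_eq_linear (P : PairValues) (e α β t : ℝ) :
    P.form e α β t = α ^ 2 * P.v₀ + (2 * α * β + β ^ 2 + t ^ 2 * (1 - P.r ^ 2)) * P.v₁
      + β ^ 2 * P.v₂ + α ^ 2 * e * P.r ^ 2 * P.s₀
      + ((2 * α * β * e * P.r ^ 2 + β ^ 2 * e * P.r ^ 2 + e * 2 * t * (1 - P.r ^ 2) * P.r * (α + β)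
        - t ^ 2 * (1 - P.r ^ 2) * e * P.r ^ 2) * P.s₁
      + (β ^ 2 * e * P.r ^ 2 + e * 2 * t * (1 - P.r ^ 2) * P.r * β
        + t ^ 2 * (1 - P.r ^ 2) * e * (1 - P.r ^ 2)) * P.s₂) := by
  rw [PairValues.form]
  ring

lemma succ_mul_pow_mul_one_sub_sq_lt {s : ℝ} (hs : 0 ≤ s) (hs' : s < 1) {n : ℕ} (hn : 1 ≤ n) :
    ((n : ℝ) + 1) * s ^ n * (1 - s ^ 2) < 1 - s ^ (2 * n + 2) := by
  induction n, hn using Nat.le_induction with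
  | base =>
    have hsq : 0 < 1 - s ^ 2 := sub_pos.mpr (pow_lt_one₀ hs hs' two_ne_zero)
    have hpos : 0 < (1 - s ^ 2) * (1 - s) ^ 2 := mul_pos hsq (pow_pos (sub_pos.mpr hs') 2)
    norm_num
    linear_combination hpos
  | succ n _ ih =>
    have hstep : 0 < (1 - s) * (1 - s ^ (n + 1)) * (1 - s ^ (n + 2)) := by
      have hn₁ := pow_lt_one₀ hs hs' n.succ_ne_zero
      have hn₂ := pow_lt_one₀ hs hs' (n + 1).succ_ne_zero
      exact mul_pos (mul_pos (sub_pos.mpr hs') (sub_pos.mpr hn₁)) (sub_pos.mpr hn₂)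
    push_cast
    linear_combination hstep + s * ih.le

lemma abs_succ_mul_pow_mul_one_sub_sq_lt {r : ℝ} (hr : |r| < 1) {n : ℕ} (hn : 1 ≤ n) :
    |((n : ℝ) + 1) * r ^ n * (1 - r ^ 2)| < 1 - r ^ (2 * n + 2) := by
  have h := succ_mul_pow_mul_one_sub_sq_lt (abs_nonneg r) hr hn
  have hsq : 0 < 1 - r ^ 2 := sub_pos.mpr ((sq_lt_one_iff_abs_lt_one r).mpr hr)
  rw [sq_abs, show 2 * n + 2 = 2 * (n + 1) by ring, pow_mul, sq_abs, ← pow_mul] at h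
  rwa [abs_mul, abs_mul, abs_pow, abs_of_pos hsq, abs_of_nonneg (by positivity : (0 : ℝ) ≤ n + 1)]

/-- The coefficient of `t²` left over after completing the square in the form of `x ^ (n + 2)`. -/
def monomialGap (e r : ℝ) (n : ℕ) : ℝ :=
  1 - r ^ (2 * n + 2) + e * (((n : ℝ) + 1) * r ^ n * (1 - r ^ 2))

lemma monomialGap_pos {e r : ℝ} (he : e = 1 ∨ e = -1) (hr : |r| < 1) {n : ℕ} (hn : 1 ≤ n) :
    0 < monomialGap e r n := by
  obtain ⟨hlt, hlt'⟩ := abs_lt.mp (abs_succ_mul_pow_mul_one_sub_sq_lt hr hn)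
  rw [monomialGap]
  rcases he with rfl | rfl <;> linarith

lemma monomialGap_nonneg {e r : ℝ} (he : e = 1 ∨ e = -1) (hr : |r| < 1) (n : ℕ) :
    0 ≤ monomialGap e r n := by
  rcases n.eq_zero_or_pos with rfl | hn
  · rw [monomialGap]
    rcases he with rfl | rfl <;> norm_num
    exact hr.le
  · exact (monomialGap_pos he hr hn).le

lemma one_add_sign_mul_pow_pos {e r : ℝ} (he : e = 1 ∨ e = -1) (hr : |r| < 1) (n : ℕ) :
    0 < 1 + e * r ^ (n + 1) := by
  have hpow : |r ^ (n + 1)| < 1 := by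
    rw [abs_pow]
    exact pow_lt_one₀ (abs_nonneg r) hr n.succ_ne_zero
  obtain ⟨hlt, hlt'⟩ := abs_lt.mp hpow
  rcases he with rfl | rfl <;> linarith

lemma mul_form_monomialValues {e : ℝ} (he : e = 1 ∨ e = -1) (r α β t : ℝ) (n : ℕ) :
    (1 + e * r ^ (n + 2)) * (monomialValues n r).form e α β t =
      ((α + (n + 2) * β) * (1 + e * r ^ (n + 2))
          + e * t * (1 - r ^ 2) * ((n + 2) * r ^ (n + 1))) ^ 2
        + t ^ 2 * ((1 - r ^ 2) * (n + 2) * monomialGap e r n) := by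
  simp only [PairValues.form, monomialValues, monomialGap]
  rcases he with rfl | rfl <;> ring

lemma form_monomialValues_nonneg {e r : ℝ} (he : e = 1 ∨ e = -1) (hr : |r| < 1) (α β t : ℝ)
    (n : ℕ) : 0 ≤ (monomialValues n r).form e α β t := by
  have hsq : 0 < 1 - r ^ 2 := sub_pos.mpr ((sq_lt_one_iff_abs_lt_one r).mpr hr)
  have hgap := monomialGap_nonneg he hr n
  refine nonneg_of_mul_nonneg_right ?_ (one_add_sign_mul_pow_pos he hr (n + 1))
  rw [mul_form_monomialValues he]
  positivity

lemma eq_zero_of_form_monomialValues_eq_zero {e r : ℝ} (he : e = 1 ∨ e = -1) (hr : |r| < 1)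
    {α β t : ℝ} {n : ℕ} (hn : 1 ≤ n) (h : (monomialValues n r).form e α β t = 0) : t = 0 := by
  have hsq : 0 < 1 - r ^ 2 := sub_pos.mpr ((sq_lt_one_iff_abs_lt_one r).mpr hr)
  have hgap : 0 < (1 - r ^ 2) * (n + 2) * monomialGap e r n :=
    mul_pos (by positivity) (monomialGap_pos he hr hn)
  have hsum := mul_form_monomialValues he r α β t n
  rw [h, mul_zero] at hsum
  have ht := (add_eq_zero_iff_of_nonneg (sq_nonneg _) (by positivity)).mp hsum.symm
  simpa [hgap.ne'] using ht.2

lemma add_eq_zero_of_form_monomialValues_eq_zero {e r : ℝ} (he : e = 1 ∨ e = -1) (hr : |r| < 1)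
    {α β : ℝ} {n : ℕ} (h : (monomialValues n r).form e α β 0 = 0) : α + (n + 2) * β = 0 := by
  have hsum := mul_form_monomialValues he r α β 0 n
  simpa [h, (one_add_sign_mul_pow_pos he hr (n + 1)).ne'] using hsum.symm

lemma hasSum_form_pairValues {γ : ℕ → ℝ} (hγ : GammaDecay γ) {r : ℝ} (hr : |r| < 1)
    (e α β t : ℝ) :
    HasSum (fun n : ℕ => γ (n + 2) ^ 2 * (monomialValues n r).form e α β t)
      ((pairValues γ r).form e α β t) := by
  have hone (k : ℕ) : HasSum (fun n : ℕ => γ (n + 2) ^ 2 * ((n + 2).descFactorial k : ℝ))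
      (reducedDeriv γ k 1) := by
    simpa using hγ.hasSum_reducedDeriv k (r := 1) (by simp)
  have hr' (k : ℕ) := hγ.hasSum_reducedDeriv k hr.le
  have hlin :=
    (((((hone 0).mul_left (α ^ 2)).add
      ((hone 1).mul_left (2 * α * β + β ^ 2 + t ^ 2 * (1 - r ^ 2)))).add
      ((hone 2).mul_left (β ^ 2))).add ((hr' 0).mul_left (α ^ 2 * e * r ^ 2))).add
      (((hr' 1).mul_left (2 * α * β * e * r ^ 2 + β ^ 2 * e * r ^ 2
        + e * 2 * t * (1 - r ^ 2) * r * (α + β) - t ^ 2 * (1 - r ^ 2) * e * r ^ 2)).add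
      ((hr' 2).mul_left (β ^ 2 * e * r ^ 2 + e * 2 * t * (1 - r ^ 2) * r * β
        + t ^ 2 * (1 - r ^ 2) * e * (1 - r ^ 2))))
  have hval : (pairValues γ r).form e α β t = _ := (pairValues γ r).form_eq_linear e α β t
  rw [hval]
  refine hlin.congr_fun fun n => ?_
  rw [PairValues.form_eq_linear]
  simp only [monomialValues, cast_descFactorial_add_two_two, Nat.descFactorial_zero,
    Nat.descFactorial_one]
  push_cast
  ring

lemma Mixed.exists_add_two {γ : ℕ → ℝ} (hm : Mixed γ) :
    ∃ m n : ℕ, m ≠ n ∧ 1 ≤ n ∧ γ (m + 2) ≠ 0 ∧ γ (n + 2) ≠ 0 := by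
  obtain ⟨p, q, hp, hq, hpq, hγp, hγq⟩ := hm
  obtain ⟨m, rfl⟩ := Nat.exists_eq_add_of_le' hp
  obtain ⟨n, rfl⟩ := Nat.exists_eq_add_of_le' hq
  rcases n.eq_zero_or_pos with rfl | hn
  · exact ⟨0, m, by lia, by lia, hγq, hγp⟩
  · exact ⟨m, n, by lia, hn, hγp, hγq⟩

lemma Mixed.form_pairValues_pos {γ : ℕ → ℝ} (hm : Mixed γ) (hγ : GammaDecay γ) {e r : ℝ}
    (he : e = 1 ∨ e = -1) (hr : |r| < 1) {α β t : ℝ} (hne : ¬(α = 0 ∧ β = 0 ∧ t = 0)) :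
    0 < (pairValues γ r).form e α β t := by
  have hsum := hasSum_form_pairValues hγ hr e α β t
  have hterm (n : ℕ) : 0 ≤ γ (n + 2) ^ 2 * (monomialValues n r).form e α β t :=
    mul_nonneg (sq_nonneg _) (form_monomialValues_nonneg he hr _ _ _ _)
  refine (hsum.nonneg hterm).lt_of_ne fun hzero => hne ?_
  have hvanish (n : ℕ) (hn : γ (n + 2) ≠ 0) : (monomialValues n r).form e α β t = 0 := by
    rw [← hzero, hasSum_zero_iff_of_nonneg hterm] at hsum
    simpa [hn] using congrFun hsum n
  obtain ⟨m, n, hmn, hn, hγm, hγn⟩ := hm.exists_add_two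
  obtain rfl := eq_zero_of_form_monomialValues_eq_zero he hr hn (hvanish n hγn)
  have hm₀ := add_eq_zero_of_form_monomialValues_eq_zero he hr (hvanish m hγm)
  have hn₀ := add_eq_zero_of_form_monomialValues_eq_zero he hr (hvanish n hγn)
  have hmn' : (m : ℝ) - n ≠ 0 := sub_ne_zero.mpr (Nat.cast_injective.ne hmn)
  have hβ : β = 0 := (mul_eq_zero_iff_left hmn').mp (by linear_combination hm₀ - hn₀)
  exact ⟨by simpa [hβ] using hm₀, hβ, rfl⟩

lemma det_pos_of_forall_form_pos {A B C : ℝ}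
    (h : ∀ α β : ℝ, ¬(α = 0 ∧ β = 0) → 0 < α ^ 2 * A + 2 * α * β * B + β ^ 2 * C) :
    0 < A ∧ 0 < A * C - B ^ 2 := by
  have hA : 0 < A := by simpa using h 1 0 (by simp)
  refine ⟨hA, pos_of_mul_pos_right (a := A) ?_ hA.le⟩
  have hB := h B (-A) (fun h' => hA.ne' (neg_eq_zero.mp h'.2))
  linear_combination hB

/-- The inequalities satisfied by the endpoint values of a mixed `ν`. -/
structure EndpointValues.IsMixed (J : EndpointValues) : Prop where
  v₀_pos : 0 < J.v₀
  v₁_pos : 0 < J.v₁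
  v₁_lt_v₂ : J.v₁ < J.v₂
  det_pos : 0 < J.v₀ * (J.v₂ + J.v₁) - J.v₁ ^ 2

lemma Mixed.endpointValues_v₁_pos {γ : ℕ → ℝ} (hm : Mixed γ) (hγ : GammaDecay γ) :
    0 < (endpointValues γ).v₁ := by
  obtain ⟨_, n, -, -, -, hγn⟩ := hm.exists_add_two
  refine lt_of_lt_of_le ?_ (le_hasSum (hγ.hasSum_reducedDeriv 1 (r := 1) (by simp)) n
    fun j _ => by positivity)
  rw [Nat.descFactorial_one]
  positivity

lemma Mixed.endpointValues_v₁_lt_v₂ {γ : ℕ → ℝ} (hm : Mixed γ) (hγ : GammaDecay γ) :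
    (endpointValues γ).v₁ < (endpointValues γ).v₂ := by
  have hsum : HasSum (fun n : ℕ => γ (n + 2) ^ 2 * (((n : ℝ) + 2) * n))
      ((endpointValues γ).v₂ - (endpointValues γ).v₁) := by
    refine ((hγ.hasSum_reducedDeriv 2 (r := 1) (by simp)).sub
      (hγ.hasSum_reducedDeriv 1 (r := 1) (by simp))).congr_fun fun n => ?_
    rw [cast_descFactorial_add_two_two, Nat.descFactorial_one]
    push_cast
    ring
  obtain ⟨_, n, -, hn, -, hγn⟩ := hm.exists_add_two
  rw [← sub_pos]
  refine lt_of_lt_of_le ?_ (le_hasSum hsum n fun j _ => by positivity)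
  positivity

lemma Mixed.isMixed_endpointValues {γ : ℕ → ℝ} (hm : Mixed γ) (hγ : GammaDecay γ) :
    (endpointValues γ).IsMixed := by
  have hpos := det_pos_of_forall_form_pos (A := (endpointValues γ).v₀) (B := (endpointValues γ).v₁)
    (C := (endpointValues γ).v₂ + (endpointValues γ).v₁) fun α β h => by
      have hform := hm.form_pairValues_pos hγ (e := 1) (Or.inl rfl) (r := 0) (by simp)
        (α := α) (β := β) (t := 0) (by simpa using h)
      simpa [PairValues.form, pairValues] using hform
  exact ⟨hpos.1, hm.endpointValues_v₁_pos hγ, hm.endpointValues_v₁_lt_v₂ hγ, hpos.2⟩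

/-! ### The function `Ω` and the ground-state equation -/

lemma Omega_neg (x : ℝ) : Omega (-x) = Omega x := by
  simp only [Omega, abs_neg, neg_sq]

lemma Omega_add_inv {n : ℝ} (hn : 0 < n) (hn' : n ≤ 1) :
    Omega (n + n⁻¹) = n ^ 2 / 2 - Real.log n := by
  rcases hn'.eq_or_lt with rfl | hlt
  · norm_num [Omega]
  have hinv : 1 < n⁻¹ := (one_lt_inv₀ hn).mpr hlt
  have hpos : 0 < n + n⁻¹ := by positivity
  have habs : ¬|n + n⁻¹| ≤ 2 := by
    have hsq : 0 < (1 - n) ^ 2 / n := div_pos (pow_pos (sub_pos.mpr hlt) 2) hn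
    have heq : n + n⁻¹ - 2 = (1 - n) ^ 2 / n := by field_simp; ring
    rw [abs_of_pos hpos]
    linarith
  have hsqrt : √((n + n⁻¹) ^ 2 - 4) = n⁻¹ - n := by
    rw [show (n + n⁻¹) ^ 2 - 4 = (n⁻¹ - n) ^ 2 by field_simp; ring]
    exact Real.sqrt_sq (by linarith)
  have hsqrt' : √((n + n⁻¹) ^ 2 / 4 - 1) = (n⁻¹ - n) / 2 := by
    rw [show (n + n⁻¹) ^ 2 / 4 - 1 = ((n⁻¹ - n) / 2) ^ 2 by field_simp; ring]
    exact Real.sqrt_sq (by linarith)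
  rw [Omega, if_neg habs, hsqrt, hsqrt', abs_of_pos hpos,
    show (n⁻¹ - n) / 2 + (n + n⁻¹) / 2 = n⁻¹ by ring, Real.log_inv]
  field_simp
  ring

lemma exists_eq_add_inv {t : ℝ} (ht : 2 ≤ t) : ∃ n, 0 < n ∧ n ≤ 1 ∧ t = n + n⁻¹ := by
  have hsq : √(t ^ 2 - 4) ^ 2 = t ^ 2 - 4 := Real.sq_sqrt (by nlinarith)
  have hlt : √(t ^ 2 - 4) < t := by
    rw [Real.sqrt_lt' (by linarith)]
    linarith
  have hle : t - 2 ≤ √(t ^ 2 - 4) := Real.le_sqrt_of_sq_le (by nlinarith)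
  refine ⟨(t - √(t ^ 2 - 4)) / 2, by linarith, by linarith, ?_⟩
  have hne : t - √(t ^ 2 - 4) ≠ 0 := (sub_pos.mpr hlt).ne'
  rw [inv_div, ← mul_right_cancel_iff_of_pos (sub_pos.mpr hlt), add_mul, div_mul_cancel₀ _ hne]
  linear_combination -hsq / 2

lemma le_of_hasDerivAt_of_mul_sub_nonneg {f f' : ℝ → ℝ} {m n : ℝ}
    (hf : ∀ x ∈ uIcc m n, HasDerivAt f (f' x) x) (hf' : ∀ x ∈ uIcc m n, 0 ≤ f' x * (x - m)) :
    f m ≤ f n := by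
  have hcont : ContinuousOn f (uIcc m n) := fun x hx => (hf x hx).continuousAt.continuousWithinAt
  rcases lt_trichotomy m n with hlt | rfl | hlt
  · rw [uIcc_of_lt hlt] at hf hf' hcont
    obtain ⟨c, hc, hslope⟩ := exists_hasDerivAt_eq_slope f f' hlt hcont
      fun x hx => hf x (Ioo_subset_Icc_self hx)
    have hnonneg := nonneg_of_mul_nonneg_left (hf' c (Ioo_subset_Icc_self hc)) (sub_pos.mpr hc.1)
    rw [hslope, le_div_iff₀ (sub_pos.mpr hlt), zero_mul] at hnonneg
    exact sub_nonneg.mp hnonneg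
  · exact le_rfl
  · rw [uIcc_of_gt hlt] at hf hf' hcont
    obtain ⟨c, hc, hslope⟩ := exists_hasDerivAt_eq_slope f f' hlt hcont
      fun x hx => hf x (Ioo_subset_Icc_self hx)
    have hnonpos := nonpos_of_mul_nonneg_left (hf' c (Ioo_subset_Icc_self hc)) (sub_neg.mpr hc.2)
    rw [hslope, div_le_iff₀ (sub_pos.mpr hlt), zero_mul] at hnonpos
    exact sub_nonpos.mp hnonpos

/-- At `t = n + n⁻¹`, the amount by which the parabola of curvature `1 / 2` tangent to `Ω` at
`m + m⁻¹` exceeds `Ω`. -/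
def tangentGap (m n : ℝ) : ℝ :=
  m ^ 2 / 2 - Real.log m + m * (n + n⁻¹ - (m + m⁻¹)) + (n + n⁻¹ - (m + m⁻¹)) ^ 2 / 4
    - (n ^ 2 / 2 - Real.log n)

lemma hasDerivAt_tangentGap (m : ℝ) {n : ℝ} (hn : 0 < n) :
    HasDerivAt (tangentGap m) ((n ^ 2 - 1) / n ^ 2 * ((m - n + (n⁻¹ - m⁻¹)) / 2)) n := by
  have hshift : HasDerivAt (fun n : ℝ => n + n⁻¹ - (m + m⁻¹)) (1 + -(n ^ 2)⁻¹) n :=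
    ((hasDerivAt_id n).add (hasDerivAt_inv hn.ne')).sub_const (m + m⁻¹)
  refine ((((hshift.const_mul m).const_add (m ^ 2 / 2 - Real.log m)).add
    ((hshift.fun_pow 2).div_const 4)).sub (((hasDerivAt_pow 2 n).div_const 2).sub
      (Real.hasDerivAt_log hn.ne'))).congr_deriv ?_
  generalize m⁻¹ = m'
  norm_num
  field_simp
  ring

lemma tangentGap_nonneg {m n : ℝ} (hm : 0 < m) (hm' : m ≤ 1) (hn : 0 < n) (hn' : n ≤ 1) :
    0 ≤ tangentGap m n := by
  have hmem {x : ℝ} (hx : x ∈ uIcc m n) : 0 < x ∧ x ≤ 1 :=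
    ⟨(lt_min hm hn).trans_le hx.1, hx.2.trans (max_le hm' hn')⟩
  have hself : tangentGap m m = 0 := by simp [tangentGap]
  rw [← hself]
  refine le_of_hasDerivAt_of_mul_sub_nonneg (fun x hx => hasDerivAt_tangentGap m (hmem hx).1)
    fun x hx => ?_
  obtain ⟨hx0, hx1⟩ := hmem hx
  have heq : (x ^ 2 - 1) / x ^ 2 * ((m - x + (x⁻¹ - m⁻¹)) / 2) * (x - m)
      = (1 - x ^ 2) / x ^ 2 * ((1 + (m * x)⁻¹) / 2) * (x - m) ^ 2 := by
    field_simp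
    ring
  have hsq : 0 ≤ 1 - x ^ 2 := sub_nonneg.mpr (pow_le_one₀ hx0.le hx1)
  rw [heq]
  positivity

lemma Omega_le_tangent {m : ℝ} (hm : 0 < m) (hm' : m ≤ 1) (t : ℝ) :
    Omega t ≤ m ^ 2 / 2 - Real.log m + m * (t - (m + m⁻¹)) + (t - (m + m⁻¹)) ^ 2 / 4 := by
  have hinv : m ≤ m⁻¹ := hm'.trans ((one_le_inv₀ hm).mpr hm')
  rcases le_or_gt |t| 2 with ht | ht
  · have hgap := tangentGap_nonneg hm hm' one_pos le_rfl
    rw [Omega, if_pos ht]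
    simp only [tangentGap, Real.log_one] at hgap
    nlinarith [mul_nonneg (sub_nonneg.mpr hinv) (sub_nonneg.mpr (abs_le.mp ht).2)]
  · obtain ⟨n, hn, hn', htn⟩ := exists_eq_add_inv ht.le
    have hgap := tangentGap_nonneg hm hm' hn hn'
    rw [tangentGap, ← Omega_add_inv hn hn', ← htn] at hgap
    rcases abs_cases t with ⟨habs, -⟩ | ⟨habs, hneg⟩
    · rw [habs] at hgap
      linarith
    · rw [habs, Omega_neg] at hgap
      nlinarith [mul_nonneg (sub_nonneg.mpr hinv) (neg_nonneg.mpr hneg.le)]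

/-- The function whose root `w` in `(0, ν′(1) / ν″(1))`, with `κ = ν(1) / ν′(1)`, parametrises the
ground state; it expresses `sup_x Θ_{ν,1}(-E₀, x) = 0`. -/
def groundEq (κ w : ℝ) : ℝ := w - 1 - Real.log w - κ * (1 - w) ^ 2 / w

lemma groundEq_one (κ : ℝ) : groundEq κ 1 = 0 := by simp [groundEq]

lemma hasDerivAt_groundEq (κ : ℝ) {w : ℝ} (hw : 0 < w) :
    HasDerivAt (groundEq κ) ((1 - w) / w ^ 2 * (κ * (1 + w) - w)) w := by
  refine ((((hasDerivAt_id w).sub_const 1).sub (Real.hasDerivAt_log hw.ne')).sub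
    (((((hasDerivAt_id w).const_sub 1).fun_pow 2).const_mul κ).div
      (hasDerivAt_id w) hw.ne')).congr_deriv ?_
  simp only [id]
  field_simp
  ring

lemma continuousOn_groundEq (κ : ℝ) {p q : ℝ} (hp : 0 < p) :
    ContinuousOn (groundEq κ) (Icc p q) := fun _ hx =>
  (hasDerivAt_groundEq κ (hp.trans_le hx.1)).continuousAt.continuousWithinAt

lemma strictMonoOn_groundEq {κ p q : ℝ} (hp : 0 < p) (hq : q ≤ 1)
    (h : ∀ w ∈ Ioo p q, 0 < κ * (1 + w) - w) : StrictMonoOn (groundEq κ) (Icc p q) := by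
  refine strictMonoOn_of_deriv_pos (convex_Icc p q) (continuousOn_groundEq κ hp) fun w hw => ?_
  rw [interior_Icc] at hw
  have hw0 : 0 < w := hp.trans hw.1
  rw [(hasDerivAt_groundEq κ hw0).deriv]
  exact mul_pos (div_pos (by linarith [hw.2]) (by positivity)) (h w hw)

lemma strictAntiOn_groundEq {κ p : ℝ} (hp : 0 < p) (h : ∀ w ∈ Ioo p 1, κ * (1 + w) - w < 0) :
    StrictAntiOn (groundEq κ) (Icc p 1) := by
  refine strictAntiOn_of_deriv_neg (convex_Icc p 1) (continuousOn_groundEq κ hp) fun w hw => ?_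
  rw [interior_Icc] at hw
  have hw0 : 0 < w := hp.trans hw.1
  rw [(hasDerivAt_groundEq κ hw0).deriv]
  exact mul_neg_of_pos_of_neg (div_pos (by linarith [hw.2]) (by positivity)) (h w hw)

section GroundEqRoot

variable {κ w : ℝ}

lemma lt_half_of_groundEq_eq_zero (hw : 0 < w) (hw' : w < 1) (h : groundEq κ w = 0) :
    κ < 1 / 2 := by
  by_contra! hκ
  have hlt := strictMonoOn_groundEq (κ := κ) hw le_rfl
    (fun s hs => by nlinarith [hs.1, hs.2]) (left_mem_Icc.mpr hw'.le) (right_mem_Icc.mpr hw'.le) hw'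
  rw [h, groundEq_one] at hlt
  exact lt_irrefl 0 hlt

lemma groundEq_pos_of_critical_le (hκ : 0 < κ) (hκ' : κ < 1 / 2) {s : ℝ} (hs : κ / (1 - κ) ≤ s)
    (hs' : s < 1) : 0 < groundEq κ s := by
  have hκ1 : 0 < 1 - κ := by linarith
  have hanti := strictAntiOn_groundEq (κ := κ) (p := κ / (1 - κ)) (by positivity) fun u hu => by
    have hlt := (div_lt_iff₀ hκ1).mp hu.1
    linarith
  simpa [groundEq_one] using hanti ⟨hs, hs'.le⟩ (right_mem_Icc.mpr (hs.trans hs'.le)) hs'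

lemma strictMonoOn_groundEq_of_lt_half (hκ' : κ < 1 / 2) {p : ℝ} (hp : 0 < p) :
    StrictMonoOn (groundEq κ) (Icc p (κ / (1 - κ))) := by
  have hκ1 : 0 < 1 - κ := by linarith
  refine strictMonoOn_groundEq hp ((div_le_one hκ1).mpr (by linarith)) fun u hu => ?_
  have hlt := (lt_div_iff₀ hκ1).mp hu.2
  linarith

lemma root_lt_critical (hκ : 0 < κ) (hw : 0 < w) (hw' : w < 1) (h : groundEq κ w = 0) :
    w < κ / (1 - κ) := by
  by_contra! hle
  exact (groundEq_pos_of_critical_le hκ (lt_half_of_groundEq_eq_zero hw hw' h) hle hw').ne' h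

lemma groundEq_neg_of_lt_root (hκ : 0 < κ) (hw : 0 < w) (hw' : w < 1) (h : groundEq κ w = 0)
    {s : ℝ} (hs : 0 < s) (hsw : s < w) : groundEq κ s < 0 := by
  have hcrit := (root_lt_critical hκ hw hw' h).le
  rw [← h]
  exact strictMonoOn_groundEq_of_lt_half (lt_half_of_groundEq_eq_zero hw hw' h) hs
    (left_mem_Icc.mpr (hsw.le.trans hcrit)) ⟨hsw.le, hcrit⟩ hsw

lemma groundEq_pos_of_root_lt (hκ : 0 < κ) (hw : 0 < w) (hw' : w < 1) (h : groundEq κ w = 0)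
    {s : ℝ} (hws : w < s) (hs : s < 1) : 0 < groundEq κ s := by
  have hhalf := lt_half_of_groundEq_eq_zero hw hw' h
  rcases le_total (κ / (1 - κ)) s with hle | hle
  · exact groundEq_pos_of_critical_le hκ hhalf hle hs
  · rw [← h]
    exact strictMonoOn_groundEq_of_lt_half hhalf hw
      (left_mem_Icc.mpr (root_lt_critical hκ hw hw' h).le) ⟨hws.le, hle⟩ hws

end GroundEqRoot

lemma tendsto_mul_groundEq (κ : ℝ) :
    Tendsto (fun w => w * groundEq κ w) (nhdsWithin 0 (Ioi 0)) (nhds (-κ)) := by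
  have hcont : Continuous fun w : ℝ => w * (w - 1) - w * Real.log w - κ * (1 - w) ^ 2 := by
    have := Real.continuous_mul_log
    fun_prop
  have hlim := (hcont.tendsto 0).mono_left (nhdsWithin_le_nhds (s := Ioi 0))
  simp only [zero_mul, sub_zero, one_pow, mul_one, zero_sub] at hlim
  refine hlim.congr' ?_
  filter_upwards [self_mem_nhdsWithin] with w hw
  have hw0 : w ≠ 0 := (mem_Ioi.mp hw).ne'
  rw [groundEq]
  field_simp

lemma eventually_groundEq_neg {κ : ℝ} (hκ : 0 < κ) :
    ∀ᶠ w in nhdsWithin 0 (Ioi 0), groundEq κ w < 0 := by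
  filter_upwards [(tendsto_mul_groundEq κ).eventually_lt_const (neg_neg_of_pos hκ),
    self_mem_nhdsWithin] with w hneg hw
  exact neg_of_mul_neg_right hneg (mem_Ioi.mp hw).le

/-- `G(ν)` in terms of the values of `ν` at `1`. -/
def EndpointValues.pureGap (J : EndpointValues) : ℝ :=
  Real.log (J.v₂ / J.v₁)
    - (J.v₂ + J.v₁) * (J.v₂ * J.v₀ + J.v₁ ^ 2 - J.v₁ * J.v₀) / (J.v₂ * J.v₁ ^ 2)

lemma Gfun_eq_pureGap (γ : ℕ → ℝ) : Gfun γ = (endpointValues γ).pureGap := by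
  simp [Gfun, EndpointValues.pureGap, endpointValues, nuF_eq_sq_mul_reducedDeriv,
    nuD1_eq_mul_reducedDeriv, nuD2_eq_reducedDeriv]

/-- The inequalities satisfied by the endpoint values of a mixed pure-like `ν`. -/
structure EndpointValues.IsPureLike (J : EndpointValues) : Prop extends J.IsMixed where
  pureGap_pos : 0 < J.pureGap

/-- `w` is the ground-state root of `J`. -/
structure EndpointValues.IsRoot (J : EndpointValues) (w : ℝ) : Prop where
  pos : 0 < w
  lt_ratio : w < J.v₁ / J.v₂
  groundEq_eq_zero : groundEq (J.v₀ / J.v₁) w = 0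

namespace EndpointValues

variable {J : EndpointValues}

lemma IsMixed.v₂_pos (hJ : J.IsMixed) : 0 < J.v₂ := hJ.v₁_pos.trans hJ.v₁_lt_v₂

lemma IsMixed.ratio_lt_one (hJ : J.IsMixed) : J.v₁ / J.v₂ < 1 :=
  (div_lt_one hJ.v₂_pos).mpr hJ.v₁_lt_v₂

lemma IsPureLike.groundEq_ratio_pos (hJ : J.IsPureLike) :
    0 < groundEq (J.v₀ / J.v₁) (J.v₁ / J.v₂) := by
  have hv₀ := hJ.v₀_pos
  have hv₁ := hJ.v₁_pos
  have hv₂ := hJ.v₂_pos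
  have hsub : 0 < J.v₂ - J.v₁ := sub_pos.mpr hJ.v₁_lt_v₂
  have heq : groundEq (J.v₀ / J.v₁) (J.v₁ / J.v₂)
      = J.pureGap + 2 * J.v₁ * ((J.v₂ - J.v₁) * J.v₀ + J.v₁ ^ 2) / (J.v₂ * J.v₁ ^ 2) := by
    rw [groundEq, pureGap, ← inv_div J.v₂ J.v₁, Real.log_inv]
    field_simp
    ring
  rw [heq]
  exact add_pos hJ.pureGap_pos (by positivity)

lemma IsPureLike.exists_isRoot (hJ : J.IsPureLike) : ∃ w, J.IsRoot w := by
  have hv₀ := hJ.v₀_pos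
  have hv₁ := hJ.v₁_pos
  have hv₂ := hJ.v₂_pos
  obtain ⟨s, hneg, hs⟩ := ((eventually_groundEq_neg (div_pos hv₀ hv₁)).and
    (Ioo_mem_nhdsGT (div_pos hv₁ hv₂))).exists
  obtain ⟨w, hw, hzero⟩ := intermediate_value_Ioo hs.2.le (continuousOn_groundEq (J.v₀ / J.v₁) hs.1)
    ⟨hneg, hJ.groundEq_ratio_pos⟩
  exact ⟨w, hs.1.trans hw.1, hw.2, hzero⟩

end EndpointValues

/-! ### The ground state -/

/-- The quadratic form of the inverse of the symmetric matrix `!![A, B; B, C]`. -/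
def invForm (A B C u x : ℝ) : ℝ :=
  (C * u ^ 2 - 2 * B * u * x + A * x ^ 2) / (A * C - B ^ 2)

lemma dotProduct_inv_mulVec_eq_invForm (A B C u x : ℝ) :
    ![u, x] ⬝ᵥ (!![A, B; B, C]⁻¹ *ᵥ ![u, x]) = invForm A B C u x := by
  rw [Matrix.inv_def, Matrix.adjugate_fin_two_of, Matrix.det_fin_two_of, Ring.inverse_eq_inv',
    invForm, ← sq]
  simp only [Matrix.smul_of, Matrix.smul_cons, smul_eq_mul, Matrix.smul_empty, Matrix.mulVec,
    dotProduct, Fin.sum_univ_two, Matrix.of_apply, Matrix.cons_val_zero, Matrix.cons_val_one]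
  ring

lemma invForm_neg_neg (A B C u x : ℝ) : invForm A B C (-u) (-x) = invForm A B C u x := by
  simp only [invForm, neg_sq]
  ring

lemma invForm_eq_of_dual {A B C : ℝ} (hdet : A * C - B ^ 2 ≠ 0) (α β : ℝ) :
    invForm A B C (A * α + B * β) (B * α + C * β) = α ^ 2 * A + 2 * α * β * B + β ^ 2 * C := by
  rw [invForm, div_eq_iff hdet]
  ring

-- The tangent inequality at `-(Aα + Bβ, Bα + Cβ)`, with the second-order term in `x` kept.
lemma le_invForm_of_dual {A B C : ℝ} (hC : 0 < C) (hdet : 0 < A * C - B ^ 2) (α β u x : ℝ) :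
    invForm A B C (A * α + B * β) (B * α + C * β)
        - 2 * (α * (u + (A * α + B * β)) + β * (x + (B * α + C * β)))
        + (x + (B * α + C * β)) ^ 2 / C ≤ invForm A B C u x := by
  have hsquare : 0 ≤ (C * (u + (A * α + B * β)) - B * (x + (B * α + C * β))) ^ 2
      / (C * (A * C - B ^ 2)) := by positivity
  refine (le_add_of_nonneg_right hsquare).trans_eq ?_
  rw [invForm, invForm]
  generalize hD : A * C - B ^ 2 = D at hdet ⊢
  field_simp
  rw [← hD]
  ring

namespace EndpointValues

/-- The ground-state root of `J`, arbitrary when there is none. -/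
def root (J : EndpointValues) : ℝ := Classical.epsilon J.IsRoot

/-- The `x`-coordinate of `Σ⁻¹ (E₀, x₀)`, where `Σ` is the one-point covariance. -/
def dualX (J : EndpointValues) : ℝ := Real.sqrt (J.root / J.v₁)

/-- The `u`-coordinate of `Σ⁻¹ (E₀, x₀)`, where `Σ` is the one-point covariance. -/
def dualU (J : EndpointValues) : ℝ := 1 / (J.dualX * J.v₁) - J.dualX

/-- The ground-state energy `E₀` in terms of the dual point. -/
def groundEnergy (J : EndpointValues) : ℝ := J.v₀ * J.dualU + J.v₁ * J.dualX

/-- The radial derivative `x₀` at the ground state in terms of the dual point. -/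
def groundX (J : EndpointValues) : ℝ := J.v₁ * J.dualU + (J.v₂ + J.v₁) * J.dualX

/-- The squared ratio `m²`, where `x₀ / √ν″(1) = m + m⁻¹` with `m ≤ 1`. -/
def edgeRatio (J : EndpointValues) : ℝ := J.v₂ * J.dualX ^ 2

/-- The one-point complexity `Θ_{ν,1}`. -/
def theta (J : EndpointValues) (u x : ℝ) : ℝ :=
  1 / 2 + 1 / 2 * Real.log (J.v₂ / J.v₁) - 1 / 2 * invForm J.v₀ J.v₁ (J.v₂ + J.v₁) u x
    + Omega (x / Real.sqrt J.v₂)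

/-- The curvature in `x` of the quadratic upper bound for `theta` at the ground state. -/
def thetaCurvature (J : EndpointValues) : ℝ := 1 / (2 * (J.v₂ + J.v₁)) - 1 / (4 * J.v₂)

namespace IsPureLike

variable {J : EndpointValues}

lemma isRoot_root (hJ : J.IsPureLike) : J.IsRoot J.root :=
  Classical.epsilon_spec hJ.exists_isRoot

lemma root_lt_one (hJ : J.IsPureLike) : J.root < 1 :=
  hJ.isRoot_root.lt_ratio.trans hJ.ratio_lt_one

lemma dualX_pos (hJ : J.IsPureLike) : 0 < J.dualX :=
  Real.sqrt_pos.mpr (div_pos hJ.isRoot_root.pos hJ.v₁_pos)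

lemma v₁_mul_dualX_sq (hJ : J.IsPureLike) : J.v₁ * J.dualX ^ 2 = J.root := by
  rw [dualX, Real.sq_sqrt (div_pos hJ.isRoot_root.pos hJ.v₁_pos).le,
    mul_div_cancel₀ _ hJ.v₁_pos.ne']

lemma v₁_mul_dualU_mul_dualX (hJ : J.IsPureLike) : J.v₁ * J.dualU * J.dualX = 1 - J.root := by
  have hβ := hJ.dualX_pos
  have hv₁ := hJ.v₁_pos
  rw [← hJ.v₁_mul_dualX_sq, dualU]
  field_simp

lemma dualU_pos (hJ : J.IsPureLike) : 0 < J.dualU := by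
  have hprod : 0 < J.v₁ * J.dualU * J.dualX := by
    rw [hJ.v₁_mul_dualU_mul_dualX]
    exact sub_pos.mpr hJ.root_lt_one
  exact pos_of_mul_pos_right (pos_of_mul_pos_left hprod hJ.dualX_pos.le) hJ.v₁_pos.le

lemma edgeRatio_pos (hJ : J.IsPureLike) : 0 < J.edgeRatio :=
  mul_pos hJ.v₂_pos (pow_pos hJ.dualX_pos 2)

lemma v₁_mul_edgeRatio (hJ : J.IsPureLike) : J.v₁ * J.edgeRatio = J.v₂ * J.root := by
  rw [edgeRatio, ← hJ.v₁_mul_dualX_sq]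
  ring

lemma edgeRatio_lt_one (hJ : J.IsPureLike) : J.edgeRatio < 1 := by
  have hroot := (lt_div_iff₀ hJ.v₂_pos).mp hJ.isRoot_root.lt_ratio
  nlinarith [hJ.v₁_mul_edgeRatio, hJ.v₁_pos]

lemma groundX_eq (hJ : J.IsPureLike) : J.groundX = J.v₂ * J.dualX + 1 / J.dualX := by
  have hβ := hJ.dualX_pos
  have hv₁ := hJ.v₁_pos
  rw [groundX, dualU]
  field_simp
  ring

lemma sq_sqrt_mul_dualX (hJ : J.IsPureLike) : (Real.sqrt J.v₂ * J.dualX) ^ 2 = J.edgeRatio := by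
  rw [mul_pow, Real.sq_sqrt hJ.v₂_pos.le, edgeRatio]

lemma sqrt_mul_dualX_pos (hJ : J.IsPureLike) : 0 < Real.sqrt J.v₂ * J.dualX :=
  mul_pos (Real.sqrt_pos.mpr hJ.v₂_pos) hJ.dualX_pos

lemma sqrt_mul_dualX_le_one (hJ : J.IsPureLike) : Real.sqrt J.v₂ * J.dualX ≤ 1 := by
  rw [← sq_le_one_iff₀ hJ.sqrt_mul_dualX_pos.le, hJ.sq_sqrt_mul_dualX]
  exact hJ.edgeRatio_lt_one.le

lemma groundX_div_sqrt (hJ : J.IsPureLike) : J.groundX / Real.sqrt J.v₂ =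
    Real.sqrt J.v₂ * J.dualX + (Real.sqrt J.v₂ * J.dualX)⁻¹ := by
  have hβ := hJ.dualX_pos
  have hsqrt := Real.sqrt_pos.mpr hJ.v₂_pos
  rw [hJ.groundX_eq]
  field_simp
  rw [Real.sq_sqrt hJ.v₂_pos.le]
  ring

lemma Omega_groundX (hJ : J.IsPureLike) :
    Omega (J.groundX / Real.sqrt J.v₂) = J.edgeRatio / 2 - 1 / 2 * Real.log J.edgeRatio := by
  rw [hJ.groundX_div_sqrt, Omega_add_inv hJ.sqrt_mul_dualX_pos hJ.sqrt_mul_dualX_le_one,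
    ← hJ.sq_sqrt_mul_dualX, Real.log_pow]
  push_cast
  ring

lemma Omega_le_tangent_groundX (hJ : J.IsPureLike) (x : ℝ) :
    Omega (x / Real.sqrt J.v₂) ≤ Omega (J.groundX / Real.sqrt J.v₂)
      - J.dualX * (x + J.groundX) + (x + J.groundX) ^ 2 / (4 * J.v₂) := by
  have hsqrt := Real.sqrt_pos.mpr hJ.v₂_pos
  have htangent := Omega_le_tangent hJ.sqrt_mul_dualX_pos hJ.sqrt_mul_dualX_le_one
    (-(x / Real.sqrt J.v₂))
  rw [Omega_neg, ← Omega_add_inv hJ.sqrt_mul_dualX_pos hJ.sqrt_mul_dualX_le_one,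
    ← hJ.groundX_div_sqrt] at htangent
  refine htangent.trans_eq ?_
  nth_rewrite 8 [← Real.sq_sqrt hJ.v₂_pos.le]
  field_simp
  ring

lemma invForm_groundEnergy_groundX (hJ : J.IsPureLike) :
    invForm J.v₀ J.v₁ (J.v₂ + J.v₁) J.groundEnergy J.groundX =
      J.v₀ / J.v₁ * (1 - J.root) ^ 2 / J.root + 2 * (1 - J.root) + J.edgeRatio + J.root := by
  have hβ := hJ.dualX_pos
  have hv₁ := hJ.v₁_pos
  have hU : J.v₀ * J.dualU ^ 2 = J.v₀ / J.v₁ * (1 - J.root) ^ 2 / J.root := by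
    rw [← hJ.v₁_mul_dualU_mul_dualX, ← hJ.v₁_mul_dualX_sq]
    field_simp
  rw [groundEnergy, groundX, invForm_eq_of_dual hJ.det_pos.ne', ← hU,
    ← hJ.v₁_mul_dualU_mul_dualX, edgeRatio]
  linear_combination hJ.v₁_mul_dualX_sq

lemma theta_neg_groundEnergy_neg_groundX (hJ : J.IsPureLike) :
    J.theta (-J.groundEnergy) (-J.groundX) = 0 := by
  have hv₁ := hJ.v₁_pos
  have hv₂ := hJ.v₂_pos
  have hlog : Real.log J.edgeRatio = Real.log (J.v₂ / J.v₁) + Real.log J.root := by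
    rw [← Real.log_mul (by positivity) hJ.isRoot_root.pos.ne', div_mul_eq_mul_div,
      ← hJ.v₁_mul_edgeRatio, mul_div_cancel_left₀ _ hv₁.ne']
  have hroot := hJ.isRoot_root.groundEq_eq_zero
  rw [groundEq] at hroot
  rw [theta, invForm_neg_neg, neg_div, Omega_neg, hJ.Omega_groundX,
    hJ.invForm_groundEnergy_groundX, hlog]
  linarith

lemma theta_le (hJ : J.IsPureLike) (u x : ℝ) :
    J.theta u x ≤ J.dualU * (u + J.groundEnergy) - J.thetaCurvature * (x + J.groundX) ^ 2 := by
  have hsum := add_pos hJ.v₂_pos hJ.v₁_pos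
  have hform := le_invForm_of_dual hsum hJ.det_pos J.dualU J.dualX u x
  rw [← groundEnergy, ← groundX] at hform
  have hOmega := hJ.Omega_le_tangent_groundX x
  have hzero := hJ.theta_neg_groundEnergy_neg_groundX
  rw [theta, invForm_neg_neg, neg_div, Omega_neg] at hzero
  have hcurv : J.thetaCurvature * (x + J.groundX) ^ 2 =
      1 / 2 * ((x + J.groundX) ^ 2 / (J.v₂ + J.v₁)) - (x + J.groundX) ^ 2 / (4 * J.v₂) := by
    rw [thetaCurvature]
    field_simp
  rw [hcurv, theta]
  linarith

lemma thetaCurvature_pos (hJ : J.IsPureLike) : 0 < J.thetaCurvature := by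
  have hv₁ := hJ.v₁_pos
  have hlt := hJ.v₁_lt_v₂
  rw [thetaCurvature, sub_pos]
  apply one_div_lt_one_div_of_lt <;> linarith

lemma iSup_theta_neg_groundEnergy (hJ : J.IsPureLike) : ⨆ x, J.theta (-J.groundEnergy) x = 0 := by
  have hle : ∀ x, J.theta (-J.groundEnergy) x ≤ 0 := fun x => by
    have hbound := hJ.theta_le (-J.groundEnergy) x
    rw [neg_add_cancel, mul_zero] at hbound
    linarith [mul_nonneg hJ.thetaCurvature_pos.le (sq_nonneg (x + J.groundX))]
  refine le_antisymm (ciSup_le hle) ?_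
  exact hJ.theta_neg_groundEnergy_neg_groundX.symm.le.trans
    (le_ciSup ⟨0, forall_mem_range.mpr hle⟩ (-J.groundX))

lemma isLeast_iSup_theta_eq_zero (hJ : J.IsPureLike) :
    IsLeast {E | ⨆ x, J.theta E x = 0} (-J.groundEnergy) := by
  refine ⟨hJ.iSup_theta_neg_groundEnergy, fun u (hu : ⨆ x, J.theta u x = 0) => ?_⟩
  have hle : ∀ x, J.theta u x ≤ J.dualU * (u + J.groundEnergy) := fun x =>
    (hJ.theta_le u x).trans
      (sub_le_self _ (mul_nonneg hJ.thetaCurvature_pos.le (sq_nonneg _)))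
  have hsup : 0 ≤ J.dualU * (u + J.groundEnergy) := hu ▸ ciSup_le hle
  linarith [nonneg_of_mul_nonneg_right hsup hJ.dualU_pos]

lemma maximizers_theta_eq_singleton (hJ : J.IsPureLike) :
    {x | ∀ y, J.theta (-J.groundEnergy) y ≤ J.theta (-J.groundEnergy) x} = {-J.groundX} := by
  have hle : ∀ x, J.theta (-J.groundEnergy) x ≤ -(J.thetaCurvature * (x + J.groundX) ^ 2) :=
    fun x => by simpa using hJ.theta_le (-J.groundEnergy) x
  ext x
  rw [mem_ofPred_eq, mem_singleton_iff]
  constructor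
  · intro hmax
    have hx : J.thetaCurvature * (x + J.groundX) ^ 2 ≤ 0 := by
      linarith [hJ.theta_neg_groundEnergy_neg_groundX, hmax (-J.groundX), hle x]
    have hzero := pow_eq_zero_iff two_ne_zero |>.mp
      ((nonpos_of_mul_nonpos_right hx hJ.thetaCurvature_pos).antisymm (sq_nonneg _))
    linarith
  · rintro rfl y
    rw [hJ.theta_neg_groundEnergy_neg_groundX]
    linarith [hle y, mul_nonneg hJ.thetaCurvature_pos.le (sq_nonneg (y + J.groundX))]

end IsPureLike

end EndpointValues

lemma Theta_one_eq_theta (γ : ℕ → ℝ) (u x : ℝ) :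
    Theta γ 1 u x = (endpointValues γ).theta u x := by
  simp only [Theta, SigmaQ, dotProduct_inv_mulVec_eq_invForm, EndpointValues.theta, endpointValues,
    nuF_eq_sq_mul_reducedDeriv, nuD1_eq_mul_reducedDeriv, nuD2_eq_reducedDeriv, one_pow, one_mul]

lemma E0_eq_groundEnergy {γ : ℕ → ℝ} (hJ : (endpointValues γ).IsPureLike) :
    E0 γ = (endpointValues γ).groundEnergy := by
  simp only [E0, Theta_one_eq_theta, hJ.isLeast_iSup_theta_eq_zero.csInf_eq, neg_neg]

lemma x0_eq_groundX {γ : ℕ → ℝ} (hJ : (endpointValues γ).IsPureLike) :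
    x0 γ = (endpointValues γ).groundX := by
  simp only [x0, E0_eq_groundEnergy hJ, Theta_one_eq_theta, hJ.maximizers_theta_eq_singleton,
    csSup_singleton, neg_neg]

/-! ### The pair complexity -/

/-- The symmetric `2 × 2` matrix commuting with the swap of coordinates which has eigenvalue `a` on
`(1, 1)` and `b` on `(1, -1)`. -/
def swapMatrix (a b : ℝ) : Matrix (Fin 2) (Fin 2) ℝ :=
  !![(a + b) / 2, (a - b) / 2; (a - b) / 2, (a + b) / 2]

lemma swapMatrix_mul (a b c d : ℝ) :
    swapMatrix a b * swapMatrix c d = swapMatrix (a * c) (b * d) := by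
  ext i j
  fin_cases i <;> fin_cases j <;> simp [swapMatrix] <;> ring

lemma swapMatrix_add (a b c d : ℝ) :
    swapMatrix a b + swapMatrix c d = swapMatrix (a + c) (b + d) := by
  ext i j
  fin_cases i <;> fin_cases j <;> simp [swapMatrix] <;> ring

lemma swapMatrix_one : swapMatrix 1 1 = 1 := by
  ext i j
  fin_cases i <;> fin_cases j <;> simp [swapMatrix]

lemma swapMatrix_zero : swapMatrix 0 0 = 0 := by
  ext i j
  fin_cases i <;> fin_cases j <;> simp [swapMatrix]

lemma swapMatrix_mulVec_diag (a b u : ℝ) : swapMatrix a b *ᵥ ![u, u] = ![a * u, a * u] := by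
  ext i
  fin_cases i <;> simp [swapMatrix, Matrix.mulVec, dotProduct, Fin.sum_univ_two] <;> ring

/-- The swap-symmetric block matrix acting as `!![A, B; B, C]` on swap-invariant vectors and as
`!![A', B'; B', C']` on anti-invariant ones. -/
def swapBlocks (A A' B B' C C' : ℝ) : Matrix (Fin 2 ⊕ Fin 2) (Fin 2 ⊕ Fin 2) ℝ :=
  Matrix.fromBlocks (swapMatrix A A') (swapMatrix B B') (swapMatrix B B') (swapMatrix C C')

section SwapBlocks

variable {A A' B B' C C' : ℝ}

lemma inv_swapBlocks (hD : A * C - B ^ 2 ≠ 0) (hD' : A' * C' - B' ^ 2 ≠ 0) :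
    (swapBlocks A A' B B' C C')⁻¹ = swapBlocks
      (C / (A * C - B ^ 2)) (C' / (A' * C' - B' ^ 2)) (-B / (A * C - B ^ 2))
      (-B' / (A' * C' - B' ^ 2)) (A / (A * C - B ^ 2)) (A' / (A' * C' - B' ^ 2)) := by
  refine Matrix.inv_eq_right_inv ?_
  simp only [swapBlocks, Matrix.fromBlocks_multiply, swapMatrix_mul, swapMatrix_add]
  rw [← Matrix.fromBlocks_one, ← swapMatrix_one, ← swapMatrix_zero]
  congr 2
  all_goals
    first
    | (generalize hE : A * C - B ^ 2 = E at hD ⊢; field_simp; rw [← hE]; ring)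
    | (generalize hE : A' * C' - B' ^ 2 = E at hD' ⊢; field_simp; rw [← hE]; ring)

lemma dotProduct_inv_swapBlocks_mulVec (hD : A * C - B ^ 2 ≠ 0) (hD' : A' * C' - B' ^ 2 ≠ 0)
    (u x : ℝ) :
    Sum.elim ![u, u] ![x, x] ⬝ᵥ ((swapBlocks A A' B B' C C')⁻¹ *ᵥ Sum.elim ![u, u] ![x, x]) =
      2 * invForm A B C u x := by
  rw [inv_swapBlocks hD hD', swapBlocks, Matrix.fromBlocks_mulVec]
  simp only [Sum.elim_comp_inl, Sum.elim_comp_inr, swapMatrix_mulVec_diag,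
    sumElim_dotProduct_sumElim, invForm]
  simp only [dotProduct, Fin.sum_univ_two, Matrix.cons_add_cons, Matrix.empty_add_empty,
    Matrix.cons_val_zero, Matrix.cons_val_one]
  ring

end SwapBlocks

namespace PairValues

/-- The variance of `(∂₁ + e ∂₂) / √2` in the notation of `PairValues.form`. -/
def gradVar (P : PairValues) (e : ℝ) : ℝ :=
  P.v₁ - e * (P.r ^ 2 * P.s₁ - (1 - P.r ^ 2) * P.s₂)

/-- The effect, divided by `r²`, of the second point on the conditional variance of
`(U₁ + e U₂) / √2`, in the notation of `PairValues.form`. -/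
def corrUU (P : PairValues) (e : ℝ) : ℝ :=
  e * P.s₀ - (1 - P.r ^ 2) * P.s₁ ^ 2 / P.gradVar e

/-- The analogue of `corrUU` for the covariance of `(U₁ + e U₂) / √2` and `(X₁ + e X₂) / √2`. -/
def corrUX (P : PairValues) (e : ℝ) : ℝ :=
  e * P.s₁ - (1 - P.r ^ 2) * (P.s₁ * (P.s₁ + P.s₂)) / P.gradVar e

/-- The analogue of `corrUU` for `(X₁ + e X₂) / √2`. -/
def corrXX (P : PairValues) (e : ℝ) : ℝ :=
  e * (P.s₁ + P.s₂) - (1 - P.r ^ 2) * (P.s₁ + P.s₂) ^ 2 / P.gradVar e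

/-- The variance of `(U₁ + e U₂) / √2` conditionally on `∂₁ = ∂₂ = 0`. -/
def condUU (P : PairValues) (e : ℝ) : ℝ := P.v₀ + P.r ^ 2 * P.corrUU e

/-- The covariance of `(U₁ + e U₂) / √2` and `(X₁ + e X₂) / √2` conditionally on `∂₁ = ∂₂ = 0`. -/
def condUX (P : PairValues) (e : ℝ) : ℝ := P.v₁ + P.r ^ 2 * P.corrUX e

/-- The variance of `(X₁ + e X₂) / √2` conditionally on `∂₁ = ∂₂ = 0`. -/
def condXX (P : PairValues) (e : ℝ) : ℝ := P.v₂ + P.v₁ + P.r ^ 2 * P.corrXX e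

/-- Nondegeneracy of the joint law of energies and gradients at two points. -/
structure IsPosDef (P : PairValues) : Prop where
  abs_r_lt_one : |P.r| < 1
  form_pos : ∀ e, e = 1 ∨ e = -1 → ∀ α β t, ¬(α = 0 ∧ β = 0 ∧ t = 0) → 0 < P.form e α β t

/-- The pair complexity `Ψ_{ν,1,1}(r, -u, -u, -x, -x)`. -/
def psi (P : PairValues) (u x : ℝ) : ℝ :=
  1 + 1 / 2 * Real.log ((1 - P.r ^ 2) * P.v₂ ^ 2 / (P.v₁ ^ 2 - (P.r * P.s₁) ^ 2))
    - invForm (P.condUU 1) (P.condUX 1) (P.condXX 1) u x + 2 * Omega (x / Real.sqrt P.v₂)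

lemma form_eq_cond_add_sq (P : PairValues) {e : ℝ} (he : e = 1 ∨ e = -1) (hD : P.gradVar e ≠ 0)
    (α β t : ℝ) :
    P.form e α β t = α ^ 2 * P.condUU e + 2 * α * β * P.condUX e + β ^ 2 * P.condXX e
      + (1 - P.r ^ 2) * P.gradVar e *
        (t + e * (P.r * (α * P.s₁ + β * (P.s₁ + P.s₂))) / P.gradVar e) ^ 2 := by
  have he2 : e ^ 2 = 1 := by rcases he with rfl | rfl <;> norm_num
  rw [form, ← gradVar, condUU, condUX, condXX, corrUU, corrUX, corrXX]
  generalize P.gradVar e = D at hD ⊢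
  field_simp
  ring_nf
  rw [he2]
  ring

namespace IsPosDef

variable {P : PairValues} {e : ℝ}

lemma one_sub_sq_pos (hP : P.IsPosDef) : 0 < 1 - P.r ^ 2 :=
  sub_pos.mpr ((sq_lt_one_iff_abs_lt_one P.r).mpr hP.abs_r_lt_one)

lemma gradVar_pos (hP : P.IsPosDef) (he : e = 1 ∨ e = -1) : 0 < P.gradVar e := by
  have hform := hP.form_pos e he 0 0 1 (by simp)
  have heq : P.form e 0 0 1 = (1 - P.r ^ 2) * P.gradVar e := by
    rw [form, gradVar]
    ring
  exact pos_of_mul_pos_right (heq ▸ hform) hP.one_sub_sq_pos.le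

lemma cond_form_pos (hP : P.IsPosDef) (he : e = 1 ∨ e = -1) (α β : ℝ)
    (hne : ¬(α = 0 ∧ β = 0)) :
    0 < α ^ 2 * P.condUU e + 2 * α * β * P.condUX e + β ^ 2 * P.condXX e := by
  have hD := hP.gradVar_pos he
  have hform := hP.form_pos e he α β
    (-(e * (P.r * (α * P.s₁ + β * (P.s₁ + P.s₂))) / P.gradVar e)) fun h => hne ⟨h.1, h.2.1⟩
  simpa [P.form_eq_cond_add_sq he hD.ne'] using hform

lemma det_cond_pos (hP : P.IsPosDef) (he : e = 1 ∨ e = -1) :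
    0 < P.condUU e * P.condXX e - P.condUX e ^ 2 :=
  (det_pos_of_forall_form_pos (hP.cond_form_pos he)).2

end IsPosDef

end PairValues

lemma Mixed.isPosDef_pairValues {γ : ℕ → ℝ} (hm : Mixed γ) (hγ : GammaDecay γ) {r : ℝ}
    (hr : |r| < 1) : (pairValues γ r).IsPosDef where
  abs_r_lt_one := hr
  form_pos _ he _ _ _ hne := hm.form_pairValues_pos hγ he hr hne

lemma dA_one_one (γ : ℕ → ℝ) (r : ℝ) :
    dA γ r 1 1 = r ^ 2 * reducedDeriv γ 1 r - (1 - r ^ 2) * reducedDeriv γ 2 r := by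
  simp only [dA, nuD1_eq_mul_reducedDeriv, nuD2_eq_reducedDeriv, mul_one, one_mul]
  ring

lemma SigmaUX_eq_swapBlocks {γ : ℕ → ℝ} {r : ℝ} (hP : (pairValues γ r).IsPosDef) :
    SigmaUX γ r 1 1 = swapBlocks ((pairValues γ r).condUU 1) ((pairValues γ r).condUU (-1))
      ((pairValues γ r).condUX 1) ((pairValues γ r).condUX (-1))
      ((pairValues γ r).condXX 1) ((pairValues γ r).condXX (-1)) := by
  have hD : (pairValues γ r).gradVar 1 = reducedDeriv γ 1 1 - dA γ r 1 1 := by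
    rw [dA_one_one, PairValues.gradVar, one_mul]
    rfl
  have hD' : (pairValues γ r).gradVar (-1) = reducedDeriv γ 1 1 + dA γ r 1 1 := by
    rw [dA_one_one, PairValues.gradVar, neg_one_mul, sub_neg_eq_add]
    rfl
  have hne : reducedDeriv γ 1 1 - dA γ r 1 1 ≠ 0 := hD ▸ (hP.gradVar_pos (.inl rfl)).ne'
  have hne' : reducedDeriv γ 1 1 + dA γ r 1 1 ≠ 0 := hD' ▸ (hP.gradVar_pos (.inr rfl)).ne'
  have hprod : reducedDeriv γ 1 1 * reducedDeriv γ 1 1 - dA γ r 1 1 ^ 2 =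
      (reducedDeriv γ 1 1 - dA γ r 1 1) * (reducedDeriv γ 1 1 + dA γ r 1 1) := by ring
  simp only [PairValues.condUU, PairValues.condUX, PairValues.condXX, PairValues.corrUU,
    PairValues.corrUX, PairValues.corrXX, hD, hD']
  rw [SigmaUX, swapBlocks]
  congr 1
  all_goals
    simp only [SigmaU, SigmaB, SigmaX, a2, a4, ups, nuF_eq_sq_mul_reducedDeriv,
      nuD1_eq_mul_reducedDeriv, nuD2_eq_reducedDeriv, one_pow, one_mul, mul_one, hprod]
    generalize dA γ r 1 1 = D at *
    simp only [pairValues, endpointValues]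
    generalize reducedDeriv γ 1 1 = b at *
    ext i j
    fin_cases i <;> fin_cases j <;> simp [swapMatrix] <;> field_simp <;> ring

lemma Psi0_eq_psi {γ : ℕ → ℝ} {r : ℝ} (hP : (pairValues γ r).IsPosDef) :
    Psi0 γ r = (pairValues γ r).psi (E0 γ) (x0 γ) := by
  rw [Psi0, Psi, SigmaUX_eq_swapBlocks hP, dotProduct_inv_swapBlocks_mulVec
    (hP.det_cond_pos (.inl rfl)).ne' (hP.det_cond_pos (.inr rfl)).ne', invForm_neg_neg,
    PairValues.psi]
  simp only [nuD1_eq_mul_reducedDeriv, nuD2_eq_reducedDeriv, one_pow, one_mul, neg_div, Omega_neg,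
    pairValues, endpointValues, ← sq]
  ring

/-! ### The bound for the pair complexity -/

/-- The bound for `Ψ⁰` in terms of `k = edgeRatio` and the rescaled `gradRatio` `p`. -/
def pairBound (k p : ℝ) : ℝ := 1 / 2 * ((1 + k) * (p - 1) / (k + p) - Real.log p)

lemma pairBound_eq {k p : ℝ} (h : k + p ≠ 0) :
    pairBound k p = 1 / 2 * (1 + k - Real.log p - (1 + k) ^ 2 / (k + p)) := by
  rw [pairBound]
  field_simp
  ring

lemma sub_inv_le_two_mul_log {s : ℝ} (hs : 0 < s) (hs' : s ≤ 1) : s - s⁻¹ ≤ 2 * Real.log s := by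
  have hsinh := Real.sinh_le_self_iff.mpr (Real.log_nonpos hs.le hs')
  rw [Real.sinh_log hs] at hsinh
  linarith

lemma pairBound_sq_le {k s : ℝ} (hk : 0 < k) (hs : 0 < s) (hs' : s ≤ 1) :
    pairBound k (s ^ 2) ≤ -(1 / 2 * ((1 - s ^ 2) * ((s - k) * (1 - s)) / ((k + s ^ 2) * s))) := by
  have heq : pairBound k (s ^ 2) = 1 / 2 * ((s - s⁻¹) - 2 * Real.log s)
      - 1 / 2 * ((1 - s ^ 2) * ((s - k) * (1 - s)) / ((k + s ^ 2) * s)) := by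
    rw [pairBound, Real.log_pow]
    push_cast
    field_simp
    ring
  linarith [sub_inv_le_two_mul_log hs hs']

lemma pairBound_nonpos_of_one_le {k p : ℝ} (hk : 0 < k) (hk' : k ≤ 1) (hp : 1 ≤ p) :
    pairBound k p ≤ 0 := by
  have hlog := Real.le_log_one_add_of_nonneg (sub_nonneg.mpr hp)
  rw [add_sub_cancel, show p - 1 + 2 = p + 1 by ring] at hlog
  have hfrac : (1 + k) * (p - 1) / (k + p) ≤ 2 * (p - 1) / (p + 1) := by
    rw [div_le_div_iff₀ (by linarith) (by linarith)]
    nlinarith [mul_nonneg (sq_nonneg (p - 1)) (sub_nonneg.mpr hk')]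
  rw [pairBound]
  linarith

lemma pairBound_nonpos {k p : ℝ} (hk : 0 < k) (hk' : k ≤ 1) (hp : k ^ 2 ≤ p) :
    pairBound k p ≤ 0 := by
  rcases le_total 1 p with hp1 | hp1
  · exact pairBound_nonpos_of_one_le hk hk' hp1
  have hp0 : 0 < p := (pow_pos hk 2).trans_le hp
  have hks : k ≤ √p := Real.le_sqrt_of_sq_le hp
  have hs1 : √p ≤ 1 := Real.sqrt_le_one.mpr hp1
  have hbound := pairBound_sq_le hk (Real.sqrt_pos.mpr hp0) hs1
  rw [Real.sq_sqrt hp0.le] at hbound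
  have hnonneg : 0 ≤ (1 - p) * ((√p - k) * (1 - √p)) / ((k + p) * √p) :=
    div_nonneg (mul_nonneg (sub_nonneg.mpr hp1)
      (mul_nonneg (sub_nonneg.mpr hks) (sub_nonneg.mpr hs1))) (by positivity)
  linarith

lemma pairBound_self_neg {k : ℝ} (hk : 0 < k) (hk' : k < 1) : pairBound k k < 0 := by
  have hs : 0 < √k := Real.sqrt_pos.mpr hk
  have hsq : √k ^ 2 = k := Real.sq_sqrt hk.le
  have hs1 : √k < 1 := (Real.sqrt_lt' one_pos).mpr (by rwa [one_pow])
  have hks : k < √k := by nlinarith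
  have hbound := pairBound_sq_le hk hs hs1.le
  rw [hsq] at hbound
  have hpos : 0 < (1 - k) * ((√k - k) * (1 - √k)) / ((k + k) * √k) :=
    div_pos (mul_pos (sub_pos.mpr hk') (mul_pos (sub_pos.mpr hks) (sub_pos.mpr hs1)))
      (by positivity)
  linarith

lemma continuousAt_pairBound {k p : ℝ} (hp : p ≠ 0) (hkp : k + p ≠ 0) :
    ContinuousAt (pairBound k) p := by
  unfold pairBound
  fun_prop (disch := assumption)

lemma two_mul_sub_le_invForm {A B C : ℝ} (hA : 0 < A) (hD : 0 < A * C - B ^ 2) (α β u x : ℝ) :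
    2 * (α * u + β * x) - (α ^ 2 * A + 2 * α * β * B + β ^ 2 * C) ≤ invForm A B C u x := by
  rw [invForm, le_div_iff₀ hD]
  have hsquares : A * (C * u ^ 2 - 2 * B * u * x + A * x ^ 2
      - (2 * (α * u + β * x) - (α ^ 2 * A + 2 * α * β * B + β ^ 2 * C)) * (A * C - B ^ 2))
      = (A * C - B ^ 2) * (A * α + B * β - u) ^ 2
        + ((A * C - B ^ 2) * β - (A * x - B * u)) ^ 2 := by ring
  exact sub_nonneg.mp (nonneg_of_mul_nonneg_right (hsquares ▸ by positivity) hA)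

namespace PairValues

/-- The ratio `(ν′(1)² - ν′(r)²) / ((1 - r²) ν′(1))`. -/
def gradRatio (P : PairValues) : ℝ := (P.v₁ ^ 2 - (P.r * P.s₁) ^ 2) / ((1 - P.r ^ 2) * P.v₁)

variable {P : PairValues}

lemma IsPosDef.two_mul_sub_form_le_invForm (hP : P.IsPosDef) (α β t u x : ℝ) :
    2 * (α * u + β * x) - P.form 1 α β t ≤
      invForm (P.condUU 1) (P.condUX 1) (P.condXX 1) u x := by
  have hD := hP.gradVar_pos (.inl rfl)
  obtain ⟨hA, hdet⟩ := det_pos_of_forall_form_pos (hP.cond_form_pos (.inl rfl))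
  refine le_trans ?_ (two_mul_sub_le_invForm hA hdet α β u x)
  have hsq := mul_nonneg (mul_pos hP.one_sub_sq_pos hD).le
    (sq_nonneg (t + 1 * (P.r * (α * P.s₁ + β * (P.s₁ + P.s₂))) / P.gradVar 1))
  linarith [P.form_eq_cond_add_sq (.inl rfl) hD.ne' α β t]

-- The two `form`s add up to half the variance of `α U₁ + β X₁ + g X₂ + (t₁ ∂₁ + t₂ ∂₂)`, in which
-- `t₁, t₂` make the contribution of the second point uncorrelated with `U₁` and `X₁`.
lemma form_add_form_dual (P : PairValues) (hv₁ : P.v₁ ≠ 0) (hr : 1 - P.r ^ 2 ≠ 0) (α β g : ℝ) :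
    P.form 1 (α / 2) ((β + g) / 2)
        ((-(g * (P.r * P.s₁) / (P.v₁ * (1 - P.r ^ 2))) - g * P.r / (1 - P.r ^ 2)) / 2)
      + P.form (-1) (α / 2) ((β - g) / 2)
        ((-(g * (P.r * P.s₁) / (P.v₁ * (1 - P.r ^ 2))) + g * P.r / (1 - P.r ^ 2)) / 2)
      = 1 / 2 * (α ^ 2 * P.v₀ + 2 * α * β * P.v₁ + β ^ 2 * (P.v₂ + P.v₁))
        + 1 / 2 * g ^ 2 * (P.v₂ + P.gradRatio) := by
  unfold form gradRatio
  obtain ⟨y, hy⟩ : ∃ y, y = 1 - P.r ^ 2 := ⟨_, rfl⟩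
  rw [← hy] at hr ⊢
  have hr2 : P.r ^ 2 = 1 - y := by linarith
  have hr4 : P.r ^ 4 = (1 - y) ^ 2 := by rw [← hr2]; ring
  field_simp
  ring_nf
  rw [hr4, hr2]
  ring

lemma IsPosDef.invForm_cond_gt (hP : P.IsPosDef) (hJ : P.IsPureLike) (g : ℝ) :
    1 / 2 * invForm P.v₀ P.v₁ (P.v₂ + P.v₁) P.groundEnergy P.groundX
        + g * P.groundX - 1 / 2 * g ^ 2 * (P.v₂ + P.gradRatio) <
      invForm (P.condUU 1) (P.condUX 1) (P.condXX 1) P.groundEnergy P.groundX := by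
  have hdual := hP.two_mul_sub_form_le_invForm (P.dualU / 2) ((P.dualX + g) / 2)
    ((-(g * (P.r * P.s₁) / (P.v₁ * (1 - P.r ^ 2))) - g * P.r / (1 - P.r ^ 2)) / 2)
    P.groundEnergy P.groundX
  have hanti := hP.form_pos (-1) (.inr rfl) (P.dualU / 2) ((P.dualX - g) / 2)
    ((-(g * (P.r * P.s₁) / (P.v₁ * (1 - P.r ^ 2))) + g * P.r / (1 - P.r ^ 2)) / 2)
    fun h => hJ.dualU_pos.ne' (by linarith [h.1])
  have hsum := P.form_add_form_dual hJ.v₁_pos.ne' hP.one_sub_sq_pos.ne' P.dualU P.dualX g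
  have hone := invForm_eq_of_dual hJ.det_pos.ne' P.dualU P.dualX
  rw [← EndpointValues.groundEnergy, ← EndpointValues.groundX] at hone
  have hpair : P.dualU * P.groundEnergy + P.dualX * P.groundX =
      P.dualU ^ 2 * P.v₀ + 2 * P.dualU * P.dualX * P.v₁ + P.dualX ^ 2 * (P.v₂ + P.v₁) := by
    rw [EndpointValues.groundEnergy, EndpointValues.groundX]
    ring
  rw [hone]
  linarith

lemma IsPosDef.sq_lt_sq_of_abs_le (hP : P.IsPosDef) (hv₁ : 0 < P.v₁) (hs : |P.s₁| ≤ P.v₁) :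
    (P.r * P.s₁) ^ 2 < P.v₁ ^ 2 := by
  rw [sq_lt_sq, abs_mul, abs_of_pos hv₁]
  calc |P.r| * |P.s₁| ≤ |P.r| * P.v₁ := by gcongr
    _ < 1 * P.v₁ := by gcongr; exact hP.abs_r_lt_one
    _ = P.v₁ := one_mul _

lemma IsPosDef.gradRatio_pos (hP : P.IsPosDef) (hv₁ : 0 < P.v₁) (hs : |P.s₁| ≤ P.v₁) :
    0 < P.gradRatio :=
  div_pos (sub_pos.mpr (hP.sq_lt_sq_of_abs_le hv₁ hs)) (mul_pos hP.one_sub_sq_pos hv₁)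

lemma IsPosDef.log_eq_log_gradRatio (hP : P.IsPosDef) (hJ : P.IsPureLike) (hs : |P.s₁| ≤ P.v₁) :
    Real.log ((1 - P.r ^ 2) * P.v₂ ^ 2 / (P.v₁ ^ 2 - (P.r * P.s₁) ^ 2)) =
      Real.log (P.v₂ / P.v₁) + Real.log P.edgeRatio - Real.log (P.dualX ^ 2 * P.gradRatio) := by
  have hv₁ := hJ.v₁_pos
  have hv₂ := hJ.v₂_pos
  have hβ := hJ.dualX_pos
  have hk := hJ.edgeRatio_pos
  have hy := hP.one_sub_sq_pos
  have hR := hP.gradRatio_pos hv₁ hs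
  rw [← Real.log_mul (by positivity) hk.ne', ← Real.log_div (by positivity) (by positivity),
    gradRatio, EndpointValues.edgeRatio]
  congr 1
  field_simp

theorem IsPosDef.psi_ground_lt_pairBound (hP : P.IsPosDef) (hJ : P.IsPureLike)
    (hs : |P.s₁| ≤ P.v₁) :
    P.psi P.groundEnergy P.groundX < pairBound P.edgeRatio (P.dualX ^ 2 * P.gradRatio) := by
  have hβ := hJ.dualX_pos
  have hv₂ := hJ.v₂_pos
  have hR := hP.gradRatio_pos hJ.v₁_pos hs
  have hk := hJ.edgeRatio_pos
  have hX : P.groundX = (1 + P.edgeRatio) / P.dualX := by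
    rw [hJ.groundX_eq, EndpointValues.edgeRatio]
    field_simp
    ring
  have hopt : P.groundX / (P.v₂ + P.gradRatio) * P.groundX
      - 1 / 2 * (P.groundX / (P.v₂ + P.gradRatio)) ^ 2 * (P.v₂ + P.gradRatio) =
      1 / 2 * ((1 + P.edgeRatio) ^ 2 / (P.edgeRatio + P.dualX ^ 2 * P.gradRatio)) := by
    have hden : P.edgeRatio + P.dualX ^ 2 * P.gradRatio =
        P.dualX ^ 2 * (P.v₂ + P.gradRatio) := by
      rw [EndpointValues.edgeRatio]
      ring
    rw [hX, hden]
    field_simp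
    ring
  have hform := hP.invForm_cond_gt hJ (P.groundX / (P.v₂ + P.gradRatio))
  have htheta := hJ.theta_neg_groundEnergy_neg_groundX
  rw [EndpointValues.theta, invForm_neg_neg, neg_div, Omega_neg] at htheta
  rw [psi, pairBound_eq (by positivity), hP.log_eq_log_gradRatio hJ hs]
  linarith [hJ.Omega_groundX]

lemma IsPosDef.psi_ground_neg (hP : P.IsPosDef) (hJ : P.IsPureLike) (hs : |P.s₁| ≤ P.v₁)
    (hR : P.v₂ * P.edgeRatio ≤ P.gradRatio) : P.psi P.groundEnergy P.groundX < 0 := by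
  refine (hP.psi_ground_lt_pairBound hJ hs).trans_le
    (pairBound_nonpos hJ.edgeRatio_pos hJ.edgeRatio_lt_one.le ?_)
  calc P.edgeRatio ^ 2 = P.dualX ^ 2 * (P.v₂ * P.edgeRatio) := by
        rw [EndpointValues.edgeRatio]
        ring
    _ ≤ P.dualX ^ 2 * P.gradRatio := by gcongr

end PairValues

/-! ### Gradient covariances near the endpoints -/

lemma one_sub_mul_succ_mul_pow_le {ρ : ℝ} (hρ : 0 ≤ ρ) (hρ' : ρ ≤ 1) (n : ℕ) :
    (1 - ρ) * ((n + 1) * ρ ^ n) ≤ 1 - ρ ^ (n + 1) := by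
  rw [← mul_neg_geom_sum ρ (n + 1)]
  refine mul_le_mul_of_nonneg_left ?_ (sub_nonneg.mpr hρ')
  have hsum := Finset.card_nsmul_le_sum (Finset.range (n + 1)) (ρ ^ ·) (ρ ^ n) fun i hi =>
    pow_le_pow_of_le_one hρ hρ' (Nat.lt_succ_iff.mp (Finset.mem_range.mp hi))
  simpa using hsum

section GradRatio

variable {γ : ℕ → ℝ}

lemma GammaDecay.one_sub_mul_reducedDeriv_two_le (hγ : GammaDecay γ) {ρ : ℝ} (hρ : 0 ≤ ρ)
    (hρ' : ρ ≤ 1) :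
    (1 - ρ) * reducedDeriv γ 2 ρ ≤ reducedDeriv γ 1 1 - ρ * reducedDeriv γ 1 ρ := by
  have habs : |ρ| ≤ 1 := by rwa [abs_of_nonneg hρ]
  refine hasSum_le (fun n => ?_) ((hγ.hasSum_reducedDeriv 2 habs).mul_left (1 - ρ))
    ((hγ.hasSum_reducedDeriv 1 (r := 1) (by simp)).sub
      ((hγ.hasSum_reducedDeriv 1 habs).mul_left ρ))
  rw [cast_descFactorial_add_two_two, Nat.descFactorial_one, one_pow]
  push_cast
  calc (1 - ρ) * (γ (n + 2) ^ 2 * ((n + 2) * (n + 1)) * ρ ^ n)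
      = γ (n + 2) ^ 2 * (n + 2) * ((1 - ρ) * ((n + 1) * ρ ^ n)) := by ring
    _ ≤ γ (n + 2) ^ 2 * (n + 2) * (1 - ρ ^ (n + 1)) := by
        gcongr
        exact one_sub_mul_succ_mul_pow_le hρ hρ' n
    _ = γ (n + 2) ^ 2 * (n + 2) * 1 - ρ * (γ (n + 2) ^ 2 * (n + 2) * ρ ^ n) := by ring

lemma GammaDecay.abs_mul_reducedDeriv_one_sub_le (hγ : GammaDecay γ) {a b : ℝ} (ha : |a| ≤ 1)
    (hb : |b| ≤ 1) :
    |a * reducedDeriv γ 1 a - b * reducedDeriv γ 1 b| ≤ reducedDeriv γ 2 1 * |a - b| := by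
  refine (((hγ.hasSum_reducedDeriv 1 ha).mul_left a).sub
    ((hγ.hasSum_reducedDeriv 1 hb).mul_left b)).norm_le_of_bounded
    ((hγ.hasSum_reducedDeriv 2 (r := 1) (by simp)).mul_right |a - b|) fun n => ?_
  have hpow : |a ^ (n + 1) - b ^ (n + 1)| ≤ (n + 1) * |a - b| := by
    refine (abs_pow_sub_pow_le a b (n + 1)).trans ?_
    have hmax : max |a| |b| ^ n ≤ 1 := pow_le_one₀ (by positivity) (max_le ha hb)
    rw [Nat.add_sub_cancel]
    calc |a - b| * (n + 1 : ℕ) * max |a| |b| ^ n ≤ |a - b| * (n + 1 : ℕ) * 1 := by gcongr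
      _ = (n + 1) * |a - b| := by push_cast; ring
  rw [cast_descFactorial_add_two_two, Nat.descFactorial_one, one_pow, Real.norm_eq_abs]
  push_cast
  calc |a * (γ (n + 2) ^ 2 * (n + 2) * a ^ n) - b * (γ (n + 2) ^ 2 * (n + 2) * b ^ n)|
      = |γ (n + 2) ^ 2 * (n + 2) * (a ^ (n + 1) - b ^ (n + 1))| := by ring_nf
    _ = γ (n + 2) ^ 2 * (n + 2) * |a ^ (n + 1) - b ^ (n + 1)| := by
        rw [abs_mul, abs_of_nonneg (by positivity)]
    _ ≤ γ (n + 2) ^ 2 * (n + 2) * ((n + 1) * |a - b|) := by gcongr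
    _ = γ (n + 2) ^ 2 * ((n + 2) * (n + 1)) * 1 * |a - b| := by ring

lemma gradRatio_pairValues (γ : ℕ → ℝ) (r : ℝ) :
    (pairValues γ r).gradRatio = (reducedDeriv γ 1 1 ^ 2 - (r * reducedDeriv γ 1 r) ^ 2) /
      ((1 - r ^ 2) * reducedDeriv γ 1 1) :=
  rfl

/-- A lower bound for `PairValues.gradRatio` which is continuous up to `ρ = 1`. -/
def gradRatioBound (γ : ℕ → ℝ) (ρ : ℝ) : ℝ :=
  reducedDeriv γ 2 ρ * (reducedDeriv γ 1 1 + ρ * reducedDeriv γ 1 ρ) /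
    ((1 + ρ) * reducedDeriv γ 1 1)

lemma GammaDecay.gradRatioBound_le (hγ : GammaDecay γ) (hv₁ : 0 < reducedDeriv γ 1 1) {r : ℝ}
    (hr : |r| < 1) : gradRatioBound γ |r| ≤ (pairValues γ r).gradRatio := by
  have hfactor : 1 - r ^ 2 = (1 - |r|) * (1 + |r|) := by rw [← sq_abs]; ring
  have hpos : 0 < 1 - |r| := sub_pos.mpr hr
  have hs₁ := hγ.abs_reducedDeriv_le_reducedDeriv_abs 1 hr.le
  have hs₁' : 0 ≤ reducedDeriv γ 1 |r| := (abs_nonneg _).trans hs₁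
  have hslope := hγ.one_sub_mul_reducedDeriv_two_le (abs_nonneg r) hr.le
  have hsq : (r * reducedDeriv γ 1 r) ^ 2 ≤ (|r| * reducedDeriv γ 1 |r|) ^ 2 := by
    rw [← sq_abs, abs_mul]
    gcongr
  have hnum : (1 - |r|) * reducedDeriv γ 2 |r| * (reducedDeriv γ 1 1 + |r| * reducedDeriv γ 1 |r|)
      ≤ reducedDeriv γ 1 1 ^ 2 - (r * reducedDeriv γ 1 r) ^ 2 := by
    calc _ ≤ (reducedDeriv γ 1 1 - |r| * reducedDeriv γ 1 |r|)
          * (reducedDeriv γ 1 1 + |r| * reducedDeriv γ 1 |r|) := by gcongr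
      _ = reducedDeriv γ 1 1 ^ 2 - (|r| * reducedDeriv γ 1 |r|) ^ 2 := by ring
      _ ≤ _ := by gcongr
  calc gradRatioBound γ |r| = (1 - |r|) * reducedDeriv γ 2 |r| *
        (reducedDeriv γ 1 1 + |r| * reducedDeriv γ 1 |r|) / ((1 - r ^ 2) * reducedDeriv γ 1 1) := by
        rw [gradRatioBound, hfactor]
        field_simp
    _ ≤ (pairValues γ r).gradRatio := by
        rw [gradRatio_pairValues, hfactor]
        gcongr

lemma GammaDecay.gradRatio_le (hγ : GammaDecay γ) (hv₁ : 0 < reducedDeriv γ 1 1) {e r : ℝ}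
    (he : |e| = 1) (hs₁ : |reducedDeriv γ 1 e| = reducedDeriv γ 1 1) (hr : |r| < 1)
    (her : |e - r| = 1 - |r|) :
    (pairValues γ r).gradRatio ≤ 2 * reducedDeriv γ 2 1 / (1 + |r|) := by
  have hfactor : 1 - r ^ 2 = (1 - |r|) * (1 + |r|) := by rw [← sq_abs]; ring
  have hpos : 0 < 1 - |r| := sub_pos.mpr hr
  have hlip := hγ.abs_mul_reducedDeriv_one_sub_le he.le hr.le
  rw [her] at hlip
  have hedge : |e * reducedDeriv γ 1 e| = reducedDeriv γ 1 1 := by rw [abs_mul, he, hs₁, one_mul]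
  have hle : |r * reducedDeriv γ 1 r| ≤ reducedDeriv γ 1 1 := by
    rw [abs_mul]
    exact (mul_le_of_le_one_left (abs_nonneg _) hr.le).trans (hγ.abs_reducedDeriv_le 1 hr.le)
  have hadd : |e * reducedDeriv γ 1 e + r * reducedDeriv γ 1 r| ≤ 2 * reducedDeriv γ 1 1 := by
    linarith [abs_add_le (e * reducedDeriv γ 1 e) (r * reducedDeriv γ 1 r)]
  have hnum : reducedDeriv γ 1 1 ^ 2 - (r * reducedDeriv γ 1 r) ^ 2
      ≤ reducedDeriv γ 2 1 * (1 - |r|) * (2 * reducedDeriv γ 1 1) := by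
    calc _ = (e * reducedDeriv γ 1 e - r * reducedDeriv γ 1 r)
            * (e * reducedDeriv γ 1 e + r * reducedDeriv γ 1 r) := by
          rw [← hedge, sq_abs]
          ring
      _ ≤ _ := (le_abs_self _).trans ((abs_mul _ _).trans_le
          (mul_le_mul hlip hadd (abs_nonneg _) ((abs_nonneg _).trans hlip)))
  calc (pairValues γ r).gradRatio ≤ reducedDeriv γ 2 1 * (1 - |r|) * (2 * reducedDeriv γ 1 1) /
        ((1 - r ^ 2) * reducedDeriv γ 1 1) := by
        rw [gradRatio_pairValues, hfactor]
        gcongr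
    _ = 2 * reducedDeriv γ 2 1 / (1 + |r|) := by
        rw [hfactor]
        field_simp

lemma GammaDecay.tendsto_gradRatioBound (hγ : GammaDecay γ) (hv₁ : reducedDeriv γ 1 1 ≠ 0) :
    Tendsto (fun q : (ℕ → ℝ) × ℝ => gradRatioBound q.1 q.2)
      (mixtureNhds γ ×ˢ nhdsWithin 1 (Icc (-1) 1)) (nhds (reducedDeriv γ 2 1)) := by
  have hone : (1 : ℝ) ∈ Icc (-1) 1 := by simp
  have hρ : Tendsto Prod.snd (mixtureNhds γ ×ˢ nhdsWithin (1 : ℝ) (Icc (-1) 1)) (nhds 1) :=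
    tendsto_snd.mono_right nhdsWithin_le_nhds
  have hv₁' := (hγ.tendsto_reducedDeriv_one (k := 1) (by norm_num)).comp
    (tendsto_fst (g := nhdsWithin (1 : ℝ) (Icc (-1) 1)))
  have hs₁ := hγ.tendsto_reducedDeriv (k := 1) (by norm_num) hone
  have hs₂ := hγ.tendsto_reducedDeriv (k := 2) (by norm_num) hone
  have hlim := (hs₂.mul (hv₁'.add (hρ.mul hs₁))).div ((hρ.const_add 1).mul hv₁')
    (mul_ne_zero (by norm_num) hv₁)
  have hvalue : reducedDeriv γ 2 1 * (reducedDeriv γ 1 1 + 1 * reducedDeriv γ 1 1) /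
      ((1 + 1) * reducedDeriv γ 1 1) = reducedDeriv γ 2 1 := by
    field_simp
  rw [hvalue] at hlim
  exact hlim

end GradRatio

/-- The mixtures which are mixed and pure-like, for which Condition M is a question about `Ψ⁰`. -/
structure IsPureLikeMixture (γ : ℕ → ℝ) : Prop where
  decay : GammaDecay γ
  mixed : Mixed γ
  pureLike : PureLike γ

namespace IsPureLikeMixture

variable {γ : ℕ → ℝ}

lemma endpoint (h : IsPureLikeMixture γ) : (endpointValues γ).IsPureLike where
  toIsMixed := h.mixed.isMixed_endpointValues h.decay
  pureGap_pos := by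
    rw [← Gfun_eq_pureGap]
    exact h.pureLike

lemma isPosDef (h : IsPureLikeMixture γ) {r : ℝ} (hr : |r| < 1) : (pairValues γ r).IsPosDef :=
  h.mixed.isPosDef_pairValues h.decay hr

lemma Psi0_eq_psi_ground (h : IsPureLikeMixture γ) {r : ℝ} (hr : |r| < 1) :
    Psi0 γ r =
      (pairValues γ r).psi (endpointValues γ).groundEnergy (endpointValues γ).groundX := by
  rw [Psi0_eq_psi (h.isPosDef hr), E0_eq_groundEnergy h.endpoint, x0_eq_groundX h.endpoint]

lemma Psi0_lt_pairBound (h : IsPureLikeMixture γ) {r : ℝ} (hr : |r| < 1) :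
    Psi0 γ r < pairBound (endpointValues γ).edgeRatio
      ((endpointValues γ).dualX ^ 2 * (pairValues γ r).gradRatio) :=
  (h.Psi0_eq_psi_ground hr).trans_lt
    ((h.isPosDef hr).psi_ground_lt_pairBound h.endpoint (h.decay.abs_reducedDeriv_le 1 hr.le))

lemma Psi0_neg_of_le_gradRatioBound (h : IsPureLikeMixture γ) {r : ℝ} (hr : |r| < 1)
    (hle : (endpointValues γ).v₂ * (endpointValues γ).edgeRatio ≤ gradRatioBound γ |r|) :
    Psi0 γ r < 0 :=
  (h.Psi0_eq_psi_ground hr).trans_lt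
    ((h.isPosDef hr).psi_ground_neg h.endpoint (h.decay.abs_reducedDeriv_le 1 hr.le)
      (hle.trans (h.decay.gradRatioBound_le h.endpoint.v₁_pos hr)))

end IsPureLikeMixture

section Endpoint

variable {e : ℝ}

lemma eventually_abs_lt_one (e : ℝ) : ∀ᶠ r in nhdsWithin e (Ioo (-1) 1), |r| < 1 :=
  eventually_mem_nhdsWithin.mono fun _ hr => abs_lt.mpr hr

lemma eventually_abs_sub_eq (he : e = 1 ∨ e = -1) :
    ∀ᶠ r in nhdsWithin e (Ioo (-1) 1), |e - r| = 1 - |r| := by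
  rcases he with rfl | rfl
  · filter_upwards [nhdsWithin_le_nhds (lt_mem_nhds one_pos), self_mem_nhdsWithin] with r hpos hr
    rw [abs_of_pos hpos, abs_of_nonneg (by linarith [hr.2])]
  · filter_upwards [nhdsWithin_le_nhds (gt_mem_nhds neg_one_lt_zero), self_mem_nhdsWithin]
      with r hneg hr
    rw [abs_of_neg hneg, abs_of_nonpos (by linarith [hr.1])]
    ring

lemma tendsto_abs_nhdsWithin_one (he : |e| = 1) :
    Tendsto abs (nhdsWithin e (Ioo (-1) 1)) (nhdsWithin 1 (Icc (-1) 1)) := by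
  refine tendsto_nhdsWithin_of_tendsto_nhds_of_eventually_within _ ?_ ?_
  · rw [← he]
    exact continuous_abs.continuousWithinAt
  · filter_upwards [eventually_abs_lt_one e] with r hr
    exact ⟨by linarith [abs_nonneg r], hr.le⟩

end Endpoint

namespace IsPureLikeMixture

variable {γ : ℕ → ℝ} {e : ℝ}

lemma tendsto_gradRatio_of_abs_eq (h : IsPureLikeMixture γ) (he : e = 1 ∨ e = -1)
    (hs₁ : |reducedDeriv γ 1 e| = reducedDeriv γ 1 1) :
    Tendsto (fun r => (pairValues γ r).gradRatio) (nhdsWithin e (Ioo (-1) 1))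
      (nhds (endpointValues γ).v₂) := by
  have habs : |e| = 1 := by rcases he with rfl | rfl <;> simp
  have hr := tendsto_abs_nhdsWithin_one habs
  have hlower : Tendsto (fun r => gradRatioBound γ |r|) (nhdsWithin e (Ioo (-1) 1))
      (nhds (reducedDeriv γ 2 1)) := by
    simpa only [Function.comp_def] using
      (h.decay.tendsto_gradRatioBound h.endpoint.v₁_pos.ne').comp
        ((tendsto_const_pure.mono_right h.decay.pure_le_mixtureNhds).prodMk hr)
  have hupper : Tendsto (fun r : ℝ => 2 * reducedDeriv γ 2 1 / (1 + |r|))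
      (nhdsWithin e (Ioo (-1) 1)) (nhds (reducedDeriv γ 2 1)) := by
    have hlim := tendsto_const_nhds (x := 2 * reducedDeriv γ 2 1) |>.div
      ((hr.mono_right nhdsWithin_le_nhds).const_add 1) (by norm_num)
    rwa [one_add_one_eq_two, mul_div_cancel_left₀ _ two_ne_zero] at hlim
  refine tendsto_of_tendsto_of_tendsto_of_le_of_le' hlower hupper ?_ ?_
  · filter_upwards [eventually_abs_lt_one e] with r hr
    exact h.decay.gradRatioBound_le h.endpoint.v₁_pos hr
  · filter_upwards [eventually_abs_lt_one e, eventually_abs_sub_eq he] with r hr her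
    exact h.decay.gradRatio_le h.endpoint.v₁_pos habs hs₁ hr her

lemma tendsto_gradRatio_of_abs_lt (h : IsPureLikeMixture γ) (he : |e| = 1)
    (hs₁ : |reducedDeriv γ 1 e| < reducedDeriv γ 1 1) :
    Tendsto (fun r => (pairValues γ r).gradRatio) (nhdsWithin e (Ioo (-1) 1)) atTop := by
  have hv₁ : 0 < reducedDeriv γ 1 1 := h.endpoint.v₁_pos
  have hr : Tendsto id (nhdsWithin e (Ioo (-1) 1)) (nhds e) := nhdsWithin_le_nhds
  have hs : Tendsto (reducedDeriv γ 1) (nhdsWithin e (Ioo (-1) 1)) (nhds (reducedDeriv γ 1 e)) :=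
    (h.decay.continuousOn_reducedDeriv 1 e (abs_le.mp he.le)).mono Ioo_subset_Icc_self
  have hden : Tendsto (fun r : ℝ => (1 - r ^ 2) * reducedDeriv γ 1 1)
      (nhdsWithin e (Ioo (-1) 1)) (nhdsWithin 0 (Ioi 0)) := by
    refine tendsto_nhdsWithin_of_tendsto_nhds_of_eventually_within _ ?_ ?_
    · have hlim := ((hr.pow 2).const_sub 1).mul_const (reducedDeriv γ 1 1)
      rwa [← sq_abs e, he, one_pow, sub_self, zero_mul] at hlim
    · filter_upwards [eventually_abs_lt_one e] with r hr
      exact mul_pos (sub_pos.mpr ((sq_lt_one_iff_abs_lt_one r).mpr hr)) hv₁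
  have hnum : 0 < reducedDeriv γ 1 1 ^ 2 - (e * reducedDeriv γ 1 e) ^ 2 := by
    rw [sub_pos, sq_lt_sq, abs_mul, he, one_mul]
    exact hs₁.trans_le (le_abs_self _)
  simpa only [gradRatio_pairValues, div_eq_mul_inv, Function.comp_def, id] using
    (((hr.mul hs).pow 2).const_sub (reducedDeriv γ 1 1 ^ 2)).pos_mul_atTop hnum
      (tendsto_inv_nhdsGT_zero.comp hden)

lemma exists_neg_eventually_Psi0_le_of_abs_eq (h : IsPureLikeMixture γ) (he : e = 1 ∨ e = -1)
    (hs₁ : |reducedDeriv γ 1 e| = reducedDeriv γ 1 1) :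
    ∃ c < 0, ∀ᶠ r in nhdsWithin e (Ioo (-1) 1), Psi0 γ r ≤ c := by
  set k := (endpointValues γ).edgeRatio with hk
  have hk₀ : 0 < k := h.endpoint.edgeRatio_pos
  have hneg := pairBound_self_neg hk₀ h.endpoint.edgeRatio_lt_one
  have hratio : Tendsto (fun r => (endpointValues γ).dualX ^ 2 * (pairValues γ r).gradRatio)
      (nhdsWithin e (Ioo (-1) 1)) (nhds k) := by
    have hlim := (h.tendsto_gradRatio_of_abs_eq he hs₁).const_mul ((endpointValues γ).dualX ^ 2)
    rwa [mul_comm _ (endpointValues γ).v₂, ← EndpointValues.edgeRatio, ← hk] at hlim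
  have hbound := (continuousAt_pairBound (k := k) hk₀.ne' (add_pos hk₀ hk₀).ne').tendsto.comp hratio
  refine ⟨pairBound k k / 2, by linarith, ?_⟩
  filter_upwards [hbound.eventually (gt_mem_nhds (show pairBound k k < pairBound k k / 2 by
    linarith)), eventually_abs_lt_one e] with r hlt hr
  exact ((h.Psi0_lt_pairBound hr).trans hlt).le

lemma exists_neg_eventually_Psi0_le_of_abs_lt (h : IsPureLikeMixture γ) (he : |e| = 1)
    (hs₁ : |reducedDeriv γ 1 e| < reducedDeriv γ 1 1) :
    ∃ c < 0, ∀ᶠ r in nhdsWithin e (Ioo (-1) 1), Psi0 γ r ≤ c := by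
  have hk := h.endpoint.edgeRatio_pos
  have hp := (h.tendsto_gradRatio_of_abs_lt he hs₁).const_mul_atTop (pow_pos h.endpoint.dualX_pos 2)
  refine ⟨-1, neg_one_lt_zero, ?_⟩
  filter_upwards [(Real.tendsto_log_atTop.comp hp).eventually_ge_atTop
    (3 + (endpointValues γ).edgeRatio), hp.eventually_ge_atTop 0, eventually_abs_lt_one e]
    with r hlog hp₀ hr
  have hlt := h.Psi0_lt_pairBound hr
  rw [pairBound_eq (by positivity)] at hlt
  have hsq : 0 ≤ (1 + (endpointValues γ).edgeRatio) ^ 2 / ((endpointValues γ).edgeRatio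
      + (endpointValues γ).dualX ^ 2 * (pairValues γ r).gradRatio) := by positivity
  rw [Function.comp_apply] at hlog
  linarith

theorem limsup_Psi0_lt_zero (h : IsPureLikeMixture γ) (he : e = 1 ∨ e = -1) :
    limsup (fun r : ℝ => (Psi0 γ r : EReal)) (nhdsWithin e (Ioo (-1) 1)) < 0 := by
  have habs : |e| = 1 := by rcases he with rfl | rfl <;> simp
  obtain ⟨c, hc, hle⟩ : ∃ c < 0, ∀ᶠ r in nhdsWithin e (Ioo (-1) 1), Psi0 γ r ≤ c := by
    rcases (h.decay.abs_reducedDeriv_le 1 habs.le).eq_or_lt with hs₁ | hs₁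
    · exact h.exists_neg_eventually_Psi0_le_of_abs_eq he hs₁
    · exact h.exists_neg_eventually_Psi0_le_of_abs_lt habs hs₁
  calc limsup (fun r : ℝ => (Psi0 γ r : EReal)) (nhdsWithin e (Ioo (-1) 1)) ≤ (c : EReal) :=
        limsup_le_of_le (h := hle.mono fun _ hr => EReal.coe_le_coe_iff.mpr hr)
    _ < 0 := by exact_mod_cast hc

end IsPureLikeMixture

/-! ### The quotient `Ψ⁰(r) / r²` -/

/-- The function `log (1 - t) / t`, with its limit `-1` as value at `t = 0`. -/
def logSlope (t : ℝ) : ℝ := dslope (fun t => Real.log (1 - t)) 0 t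

lemma mul_logSlope (t : ℝ) : t * logSlope t = Real.log (1 - t) := by
  simpa [logSlope] using sub_smul_dslope (fun t => Real.log (1 - t)) 0 t

lemma analyticAt_logSlope {t : ℝ} (ht : t < 1) : AnalyticAt ℝ logSlope t := by
  have hlog {s : ℝ} (hs : s < 1) : AnalyticAt ℝ (fun s => Real.log (1 - s)) s :=
    (analyticAt_const.sub analyticAt_id).log (sub_pos.mpr hs)
  rcases eq_or_ne t 0 with rfl | hne
  · obtain ⟨p, hp⟩ := hlog one_pos
    exact ⟨_, hp.has_fpower_series_dslope_fslope⟩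
  · refine ((hlog ht).div analyticAt_id hne).congr ?_
    filter_upwards [isOpen_ne.mem_nhds hne] with s hs
    rw [Pi.div_apply, ← mul_logSlope]
    exact mul_div_cancel_left₀ _ hs

-- The resolvent identity `M⁻¹ - (M + tN)⁻¹ = t (M + tN)⁻¹ N M⁻¹`, evaluated at `M (α, β)`.
lemma invForm_sub_invForm_add_mul {A B C t A' B' C' : ℝ} (hdet : A * C - B ^ 2 ≠ 0)
    (hdet' : (A + t * A') * (C + t * C') - (B + t * B') ^ 2 ≠ 0) {α β u x : ℝ}
    (hu : u = A * α + B * β) (hx : x = B * α + C * β) :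
    invForm A B C u x - invForm (A + t * A') (B + t * B') (C + t * C') u x =
      t * ((((C + t * C') * u - (B + t * B') * x) * (A' * α + B' * β)
        + ((A + t * A') * x - (B + t * B') * u) * (B' * α + C' * β)) /
          ((A + t * A') * (C + t * C') - (B + t * B') ^ 2)) := by
  subst hu hx
  rw [invForm_eq_of_dual hdet, invForm, ← mul_div_assoc, sub_eq_iff_eq_add, ← add_div,
    eq_div_iff hdet']
  ring

namespace PairValues

/-- The part of `Ψ⁰(r) / r²` coming from the determinants of the gradients. -/
def excessLog (P : PairValues) : ℝ :=
  logSlope (P.r ^ 2) - (P.s₁ / P.v₁) ^ 2 * logSlope (P.r ^ 2 * (P.s₁ / P.v₁) ^ 2)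

/-- The part of `Ψ⁰(r) / r²` coming from the quadratic forms. -/
def excessQuad (P : PairValues) : ℝ :=
  ((P.condXX 1 * P.groundEnergy - P.condUX 1 * P.groundX)
      * (P.corrUU 1 * P.dualU + P.corrUX 1 * P.dualX)
    + (P.condUU 1 * P.groundX - P.condUX 1 * P.groundEnergy)
      * (P.corrUX 1 * P.dualU + P.corrXX 1 * P.dualX)) /
    (P.condUU 1 * P.condXX 1 - P.condUX 1 ^ 2)

/-- The quotient `Ψ⁰(r) / r²`, extended to `r = 0`. -/
def excess (P : PairValues) : ℝ := 1 / 2 * P.excessLog + P.excessQuad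

variable {P : PairValues}

lemma IsPosDef.mul_sq_div_lt_one (hP : P.IsPosDef) (hv₁ : 0 < P.v₁) (hs : |P.s₁| ≤ P.v₁) :
    P.r ^ 2 * (P.s₁ / P.v₁) ^ 2 < 1 := by
  rw [← mul_pow, ← mul_div_assoc, div_pow, div_lt_one (pow_pos hv₁ 2)]
  exact hP.sq_lt_sq_of_abs_le hv₁ hs

lemma IsPosDef.log_eq_excessLog (hP : P.IsPosDef) (hJ : P.IsMixed) (hs : |P.s₁| ≤ P.v₁) :
    Real.log ((1 - P.r ^ 2) * P.v₂ ^ 2 / (P.v₁ ^ 2 - (P.r * P.s₁) ^ 2)) =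
      2 * Real.log (P.v₂ / P.v₁) + P.r ^ 2 * P.excessLog := by
  have hv₁ := hJ.v₁_pos
  have hv₂ := hJ.v₂_pos
  have hr := hP.one_sub_sq_pos
  have hrs := sub_pos.mpr (hP.mul_sq_div_lt_one hv₁ hs)
  have hden : P.v₁ ^ 2 - (P.r * P.s₁) ^ 2 = P.v₁ ^ 2 * (1 - P.r ^ 2 * (P.s₁ / P.v₁) ^ 2) := by
    field_simp
  have hquot : (1 - P.r ^ 2) * P.v₂ ^ 2 / (P.v₁ ^ 2 - (P.r * P.s₁) ^ 2) =
      (P.v₂ / P.v₁) ^ 2 * ((1 - P.r ^ 2) / (1 - P.r ^ 2 * (P.s₁ / P.v₁) ^ 2)) := by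
    rw [hden]
    generalize 1 - P.r ^ 2 * (P.s₁ / P.v₁) ^ 2 = q at hrs
    field_simp
  rw [hquot, Real.log_mul (by positivity) (div_pos hr hrs).ne', Real.log_pow,
    Real.log_div hr.ne' hrs.ne', excessLog, mul_sub, ← mul_assoc, mul_logSlope, mul_logSlope]
  norm_cast

lemma IsPosDef.psi_ground_eq_sq_mul_excess (hP : P.IsPosDef) (hJ : P.IsPureLike)
    (hs : |P.s₁| ≤ P.v₁) : P.psi P.groundEnergy P.groundX = P.r ^ 2 * P.excess := by
  have hquad : invForm P.v₀ P.v₁ (P.v₂ + P.v₁) P.groundEnergy P.groundX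
      - invForm (P.condUU 1) (P.condUX 1) (P.condXX 1) P.groundEnergy P.groundX =
      P.r ^ 2 * P.excessQuad :=
    invForm_sub_invForm_add_mul hJ.det_pos.ne' (hP.det_cond_pos (.inl rfl)).ne' rfl rfl
  have htheta := hJ.theta_neg_groundEnergy_neg_groundX
  rw [EndpointValues.theta, invForm_neg_neg, neg_div, Omega_neg] at htheta
  rw [psi, hP.log_eq_excessLog hJ.toIsMixed hs, excess]
  linarith

end PairValues

lemma iteratedDeriv_two_eq_of_eventuallyEq_sq_mul {f H : ℝ → ℝ} (hH : AnalyticAt ℝ H 0)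
    (hf : f =ᶠ[nhds 0] fun r => r ^ 2 * H r) : iteratedDeriv 2 f 0 = 2 * H 0 := by
  have hderiv : deriv f =ᶠ[nhds 0] fun r => 2 * r * H r + r ^ 2 * deriv H r := by
    filter_upwards [hf.eventuallyEq_nhds, hH.eventually_analyticAt] with r hfr hHr
    rw [hfr.deriv_eq]
    simpa using ((hasDerivAt_pow 2 r).fun_mul hHr.differentiableAt.hasDerivAt).deriv
  rw [iteratedDeriv_succ, iteratedDeriv_one, hderiv.deriv_eq]
  simpa using
    ((((hasDerivAt_id (0 : ℝ)).const_mul 2).fun_mul hH.differentiableAt.hasDerivAt).fun_add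
    ((hasDerivAt_pow 2 (0 : ℝ)).fun_mul hH.deriv.differentiableAt.hasDerivAt)).deriv

section Analytic

variable {γ : ℕ → ℝ}

lemma GammaDecay.analyticAt_excessLog (hγ : GammaDecay γ) :
    AnalyticAt ℝ (fun r => (pairValues γ r).excessLog) 0 := by
  have hr : AnalyticAt ℝ (fun r => (pairValues γ r).r) 0 := analyticAt_id
  have hratio : AnalyticAt ℝ (fun r => (pairValues γ r).s₁ / (pairValues γ r).v₁) 0 :=
    (hγ.analyticAt_reducedDeriv 1).div_const
  have hslope : AnalyticAt ℝ logSlope ((pairValues γ 0).r ^ 2) :=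
    analyticAt_logSlope (by simp [pairValues])
  have hslope' : AnalyticAt ℝ logSlope
      ((pairValues γ 0).r ^ 2 * ((pairValues γ 0).s₁ / (pairValues γ 0).v₁) ^ 2) :=
    analyticAt_logSlope (by simp [pairValues])
  unfold PairValues.excessLog
  fun_prop

lemma GammaDecay.analyticAt_excessQuad (hγ : GammaDecay γ) (hP : (pairValues γ 0).IsPosDef) :
    AnalyticAt ℝ (fun r => (pairValues γ r).excessQuad) 0 := by
  have hgradVar_ne := (hP.gradVar_pos (.inl rfl)).ne'
  have hdet_ne := (hP.det_cond_pos (.inl rfl)).ne'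
  have hr : AnalyticAt ℝ (fun r => (pairValues γ r).r) 0 := analyticAt_id
  have hs₀ : AnalyticAt ℝ (fun r => (pairValues γ r).s₀) 0 := hγ.analyticAt_reducedDeriv 0
  have hs₁ : AnalyticAt ℝ (fun r => (pairValues γ r).s₁) 0 := hγ.analyticAt_reducedDeriv 1
  have hs₂ : AnalyticAt ℝ (fun r => (pairValues γ r).s₂) 0 := hγ.analyticAt_reducedDeriv 2
  have hconst (f : EndpointValues → ℝ) :
      AnalyticAt ℝ (fun r => f (pairValues γ r).toEndpointValues) 0 :=
    analyticAt_const (v := f (endpointValues γ))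
  have hv₀ := hconst (·.v₀)
  have hv₁ := hconst (·.v₁)
  have hv₂ := hconst (·.v₂)
  have hE := hconst (·.groundEnergy)
  have hX := hconst (·.groundX)
  have hα := hconst (·.dualU)
  have hβ := hconst (·.dualX)
  have hgradVar : AnalyticAt ℝ (fun r => (pairValues γ r).gradVar 1) 0 := by
    unfold PairValues.gradVar
    fun_prop
  unfold PairValues.excessQuad
  unfold PairValues.condUU PairValues.condUX PairValues.condXX PairValues.corrUU
    PairValues.corrUX PairValues.corrXX at *
  fun_prop (disch := assumption)

lemma GammaDecay.analyticAt_excess (hγ : GammaDecay γ) (hP : (pairValues γ 0).IsPosDef) :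
    AnalyticAt ℝ (fun r => (pairValues γ r).excess) 0 :=
  (analyticAt_const.mul hγ.analyticAt_excessLog).add (hγ.analyticAt_excessQuad hP)

end Analytic

namespace IsPureLikeMixture

variable {γ : ℕ → ℝ}

lemma Psi0_eq_sq_mul_excess (h : IsPureLikeMixture γ) {r : ℝ} (hr : |r| < 1) :
    Psi0 γ r = r ^ 2 * (pairValues γ r).excess :=
  (h.Psi0_eq_psi_ground hr).trans ((h.isPosDef hr).psi_ground_eq_sq_mul_excess h.endpoint
    (h.decay.abs_reducedDeriv_le 1 hr.le))

lemma Psi0_zero (h : IsPureLikeMixture γ) : Psi0 γ 0 = 0 := by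
  rw [h.Psi0_eq_sq_mul_excess (by simp), sq, zero_mul, zero_mul]

lemma Psi0_neg_iff (h : IsPureLikeMixture γ) {r : ℝ} (hr : |r| < 1) (hne : r ≠ 0) :
    Psi0 γ r < 0 ↔ (pairValues γ r).excess < 0 := by
  rw [h.Psi0_eq_sq_mul_excess hr]
  exact ⟨fun hneg => neg_of_mul_neg_right hneg (sq_nonneg r),
    mul_neg_of_pos_of_neg (by positivity)⟩

lemma iteratedDeriv_two_Psi0 (h : IsPureLikeMixture γ) :
    iteratedDeriv 2 (Psi0 γ) 0 = 2 * (pairValues γ 0).excess := by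
  refine iteratedDeriv_two_eq_of_eventuallyEq_sq_mul
    (h.decay.analyticAt_excess (h.isPosDef (by simp))) ?_
  filter_upwards [Ioo_mem_nhds neg_one_lt_zero one_pos] with r hr
  exact h.Psi0_eq_sq_mul_excess (abs_lt.mpr hr)

theorem conditionM_iff (h : IsPureLikeMixture γ) :
    ConditionM γ ↔ ∀ r ∈ Ioo (-1) 1, (pairValues γ r).excess < 0 := by
  simp only [ConditionM, h.mixed, h.pureLike, h.Psi0_zero, h.iteratedDeriv_two_Psi0, true_and,
    EReal.coe_zero, h.limsup_Psi0_lt_zero, true_or, or_true, and_true]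
  refine ⟨fun ⟨hzero, hmax⟩ r hr => ?_, fun hneg => ⟨?_, fun r hr hne => ?_⟩⟩
  · rcases eq_or_ne r 0 with rfl | hne
    · linarith [hzero]
    · exact (h.Psi0_neg_iff (abs_lt.mpr hr) hne).mp (hmax r hr hne)
  · linarith [hneg 0 (by norm_num)]
  · exact (h.Psi0_neg_iff (abs_lt.mpr hr) hne).mpr (hneg r hr)

end IsPureLikeMixture

/-! ### Continuity of the ground state and of the quotient -/

section Topology

/-- The topology of coordinatewise convergence. -/
instance : TopologicalSpace EndpointValues :=
  .induced (fun J => (J.v₀, J.v₁, J.v₂)) inferInstance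

/-- The topology of coordinatewise convergence. -/
instance : TopologicalSpace PairValues :=
  .induced (fun P => (P.toEndpointValues, P.r, P.s₀, P.s₁, P.s₂)) inferInstance

lemma EndpointValues.continuous_coords :
    Continuous fun J : EndpointValues => (J.v₀, J.v₁, J.v₂) :=
  continuous_induced_dom

@[fun_prop]
lemma EndpointValues.continuous_v₀ : Continuous EndpointValues.v₀ :=
  EndpointValues.continuous_coords.fst

@[fun_prop]
lemma EndpointValues.continuous_v₁ : Continuous EndpointValues.v₁ :=
  EndpointValues.continuous_coords.snd.fst

@[fun_prop]
lemma EndpointValues.continuous_v₂ : Continuous EndpointValues.v₂ :=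
  EndpointValues.continuous_coords.snd.snd

lemma PairValues.continuous_coords :
    Continuous fun P : PairValues => (P.toEndpointValues, P.r, P.s₀, P.s₁, P.s₂) :=
  continuous_induced_dom

@[fun_prop]
lemma PairValues.continuous_toEndpointValues : Continuous PairValues.toEndpointValues :=
  PairValues.continuous_coords.fst

@[fun_prop]
lemma PairValues.continuous_r : Continuous PairValues.r :=
  PairValues.continuous_coords.snd.fst

@[fun_prop]
lemma PairValues.continuous_s₀ : Continuous PairValues.s₀ :=
  PairValues.continuous_coords.snd.snd.fst

@[fun_prop]
lemma PairValues.continuous_s₁ : Continuous PairValues.s₁ :=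
  PairValues.continuous_coords.snd.snd.snd.fst

@[fun_prop]
lemma PairValues.continuous_s₂ : Continuous PairValues.s₂ :=
  PairValues.continuous_coords.snd.snd.snd.snd

end Topology

namespace EndpointValues

variable {J : EndpointValues}

lemma IsMixed.continuousAt_pureGap (hJ : J.IsMixed) : ContinuousAt pureGap J := by
  have hv₁ := hJ.v₁_pos.ne'
  have hv₂ := hJ.v₂_pos.ne'
  have hlog := div_ne_zero hv₂ hv₁
  have hden := mul_ne_zero hv₂ (pow_ne_zero 2 hv₁)
  unfold pureGap
  fun_prop (disch := assumption)

namespace IsPureLike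

lemma eventually_isPureLike (hJ : J.IsPureLike) : ∀ᶠ J' in nhds J, J'.IsPureLike := by
  have hdet : Continuous fun J : EndpointValues => J.v₀ * (J.v₂ + J.v₁) - J.v₁ ^ 2 := by fun_prop
  filter_upwards [continuous_v₀.tendsto J |>.eventually_const_lt hJ.v₀_pos,
    continuous_v₁.tendsto J |>.eventually_const_lt hJ.v₁_pos,
    (continuous_v₁.tendsto J).eventually_lt (continuous_v₂.tendsto J) hJ.v₁_lt_v₂,
    hdet.tendsto J |>.eventually_const_lt hJ.det_pos,
    hJ.continuousAt_pureGap.eventually_const_lt hJ.pureGap_pos] with J' h₀ h₁ h₁₂ hdet hgap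
  exact ⟨⟨h₀, h₁, h₁₂, hdet⟩, hgap⟩

lemma continuousAt_groundEq (hJ : J.IsPureLike) (s : ℝ) :
    ContinuousAt (fun J : EndpointValues => groundEq (J.v₀ / J.v₁) s) J := by
  have hv₁ := hJ.v₁_pos.ne'
  unfold groundEq
  fun_prop (disch := assumption)

lemma groundEq_neg (hJ : J.IsPureLike) {s : ℝ} (hs : 0 < s) (hlt : s < J.root) :
    groundEq (J.v₀ / J.v₁) s < 0 :=
  groundEq_neg_of_lt_root (div_pos hJ.v₀_pos hJ.v₁_pos) hJ.isRoot_root.pos hJ.root_lt_one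
    hJ.isRoot_root.groundEq_eq_zero hs hlt

lemma groundEq_pos (hJ : J.IsPureLike) {s : ℝ} (hlt : J.root < s) (hs : s < 1) :
    0 < groundEq (J.v₀ / J.v₁) s :=
  groundEq_pos_of_root_lt (div_pos hJ.v₀_pos hJ.v₁_pos) hJ.isRoot_root.pos hJ.root_lt_one
    hJ.isRoot_root.groundEq_eq_zero hlt hs

lemma continuousAt_root (hJ : J.IsPureLike) : ContinuousAt root J := by
  refine tendsto_order.mpr ⟨fun a ha => ?_, fun b hb => ?_⟩
  · obtain ⟨s, hs, hsJ⟩ := exists_between (max_lt ha hJ.isRoot_root.pos)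
    have hs₀ : 0 < s := (le_max_right _ _).trans_lt hs
    filter_upwards [hJ.eventually_isPureLike,
      (hJ.continuousAt_groundEq s).eventually_lt_const (hJ.groundEq_neg hs₀ hsJ)] with J' hJ' hneg
    by_contra! hle
    exact hneg.asymm (hJ'.groundEq_pos (hle.trans_lt ((le_max_left _ _).trans_lt hs))
      (hsJ.trans hJ.root_lt_one))
  · obtain ⟨s, hJs, hs⟩ := exists_between (lt_min hb hJ.root_lt_one)
    filter_upwards [hJ.eventually_isPureLike, (hJ.continuousAt_groundEq s).eventually_const_lt
      (hJ.groundEq_pos hJs (hs.trans_le (min_le_right _ _)))] with J' hJ' hpos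
    by_contra! hle
    exact hpos.asymm (hJ'.groundEq_neg (hJ.isRoot_root.pos.trans hJs)
      ((hs.trans_le (min_le_left _ _)).trans_le hle))

lemma continuousAt_dualX (hJ : J.IsPureLike) : ContinuousAt dualX J := by
  have hv₁ := hJ.v₁_pos.ne'
  have hroot := hJ.continuousAt_root
  unfold dualX
  fun_prop (disch := assumption)

lemma continuousAt_dualU (hJ : J.IsPureLike) : ContinuousAt dualU J := by
  have hne := mul_ne_zero hJ.dualX_pos.ne' hJ.v₁_pos.ne'
  have hdualX := hJ.continuousAt_dualX
  unfold dualU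
  fun_prop (disch := assumption)

lemma continuousAt_groundEnergy (hJ : J.IsPureLike) : ContinuousAt groundEnergy J := by
  have hdualX := hJ.continuousAt_dualX
  have hdualU := hJ.continuousAt_dualU
  unfold groundEnergy
  fun_prop

lemma continuousAt_groundX (hJ : J.IsPureLike) : ContinuousAt groundX J := by
  have hdualX := hJ.continuousAt_dualX
  have hdualU := hJ.continuousAt_dualU
  unfold groundX
  fun_prop

lemma continuousAt_edgeRatio (hJ : J.IsPureLike) : ContinuousAt edgeRatio J := by
  have hdualX := hJ.continuousAt_dualX
  unfold edgeRatio
  fun_prop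

end IsPureLike

end EndpointValues

namespace PairValues.IsPosDef

variable {P : PairValues}

lemma continuousAt_excessLog (hP : P.IsPosDef) (hv₁ : 0 < P.v₁) (hs : |P.s₁| ≤ P.v₁) :
    ContinuousAt excessLog P := by
  have hne := hv₁.ne'
  have hslope : ContinuousAt logSlope (P.r ^ 2) :=
    (analyticAt_logSlope (sub_pos.mp hP.one_sub_sq_pos)).continuousAt
  have hslope' : ContinuousAt logSlope (P.r ^ 2 * (P.s₁ / P.v₁) ^ 2) :=
    (analyticAt_logSlope (hP.mul_sq_div_lt_one hv₁ hs)).continuousAt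
  unfold excessLog
  fun_prop (disch := assumption)

lemma continuousAt_excessQuad (hP : P.IsPosDef) (hJ : P.IsPureLike) :
    ContinuousAt excessQuad P := by
  have hgradVar_ne := (hP.gradVar_pos (.inl rfl)).ne'
  have hdet_ne := (hP.det_cond_pos (.inl rfl)).ne'
  have hproj := continuous_toEndpointValues.continuousAt (x := P)
  have hE := hJ.continuousAt_groundEnergy.comp' hproj
  have hX := hJ.continuousAt_groundX.comp' hproj
  have hα := hJ.continuousAt_dualU.comp' hproj
  have hβ := hJ.continuousAt_dualX.comp' hproj
  have hgradVar : ContinuousAt (fun P : PairValues => P.gradVar 1) P := by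
    unfold gradVar
    fun_prop
  unfold excessQuad
  unfold condUU condUX condXX corrUU corrUX corrXX at *
  fun_prop (disch := assumption)

lemma continuousAt_excess (hP : P.IsPosDef) (hJ : P.IsPureLike) (hs : |P.s₁| ≤ P.v₁) :
    ContinuousAt excess P :=
  (continuousAt_const.mul (hP.continuousAt_excessLog hJ.v₁_pos hs)).add
    (hP.continuousAt_excessQuad hJ)

end PairValues.IsPosDef

/-! ### Perturbation of the mixture -/

section Perturbation

variable {γ : ℕ → ℝ}

lemma GammaDecay.tendsto_endpointValues (hγ : GammaDecay γ) :
    Tendsto endpointValues (mixtureNhds γ) (nhds (endpointValues γ)) := by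
  rw [nhds_induced, tendsto_comap_iff]
  exact (hγ.tendsto_reducedDeriv_one (by norm_num)).prodMk_nhds
    ((hγ.tendsto_reducedDeriv_one (by norm_num)).prodMk_nhds
      (hγ.tendsto_reducedDeriv_one (by norm_num)))

lemma GammaDecay.tendsto_pairValues (hγ : GammaDecay γ) {r : ℝ} (hr : r ∈ Icc (-1) 1) :
    Tendsto (fun q : (ℕ → ℝ) × ℝ => pairValues q.1 q.2)
      (mixtureNhds γ ×ˢ nhdsWithin r (Icc (-1) 1)) (nhds (pairValues γ r)) := by
  have hJ := hγ.tendsto_endpointValues.comp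
    (tendsto_fst (f := mixtureNhds γ) (g := nhdsWithin r (Icc (-1) 1)))
  have hr' : Tendsto Prod.snd (mixtureNhds γ ×ˢ nhdsWithin r (Icc (-1) 1)) (nhds r) :=
    tendsto_snd.mono_right nhdsWithin_le_nhds
  rw [nhds_induced, tendsto_comap_iff]
  exact hJ.prodMk_nhds (hr'.prodMk_nhds ((hγ.tendsto_reducedDeriv (by norm_num) hr).prodMk_nhds
    ((hγ.tendsto_reducedDeriv (by norm_num) hr).prodMk_nhds
      (hγ.tendsto_reducedDeriv (by norm_num) hr))))

lemma GammaDecay.eventually_ne_zero (hγ : GammaDecay γ) {p : ℕ} (hp : 2 ≤ p) (hne : γ p ≠ 0) :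
    ∀ᶠ γ' in mixtureNhds γ, γ' p ≠ 0 := by
  filter_upwards [eventually_gammaDecay γ,
    (tendsto_mixDist γ).eventually_lt_const (show 0 < γ p ^ 2 by positivity)] with γ' hγ' hlt h₀
  have hle := abs_sq_sub_sq_le_mixDist hγ hγ' hp
  rw [h₀, zero_pow two_ne_zero, zero_sub, abs_neg, abs_sq] at hle
  exact hle.not_gt hlt

lemma Mixed.eventually (hm : Mixed γ) (hγ : GammaDecay γ) :
    ∀ᶠ γ' in mixtureNhds γ, Mixed γ' := by
  obtain ⟨p, q, hp, hq, hpq, hγp, hγq⟩ := hm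
  filter_upwards [hγ.eventually_ne_zero hp hγp, hγ.eventually_ne_zero hq hγq] with γ' hp' hq'
  exact ⟨p, q, hp, hq, hpq, hp', hq'⟩

end Perturbation

lemma eventually_forall_mem_of_isCompact {α X : Type*} [TopologicalSpace X] {l : Filter α}
    {K S : Set X} {p : α → X → Prop} (hK : IsCompact K) (hSK : S ⊆ K)
    (h : ∀ x ∈ K, ∀ᶠ q in l ×ˢ nhdsWithin x S, p q.1 q.2) : ∀ᶠ a in l, ∀ x ∈ S, p a x := by
  have hmem : {q : α × X | q.2 ∈ S → p q.1 q.2} ∈ l ×ˢ nhdsSet K :=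
    hK.mem_prod_nhdsSet_of_forall fun x hx => by
      have hin : Tendsto id (l ×ˢ nhds x ⊓ 𝓟 (Prod.snd ⁻¹' S)) (l ×ˢ nhdsWithin x S) :=
        (tendsto_fst.mono_left inf_le_left).prodMk
          (tendsto_inf.mpr ⟨tendsto_snd.mono_left inf_le_left,
            tendsto_principal.mpr (eventually_inf_principal.mpr (.of_forall fun _ => id))⟩)
      exact eventually_inf_principal.mp (hin.eventually (h x hx))
  filter_upwards [eventually_prod_principal_iff.mp
    (Filter.prod_mono_right l principal_le_nhdsSet hmem)] with a ha x hx
  exact ha x (hSK hx) hx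

namespace IsPureLikeMixture

variable {γ : ℕ → ℝ}

lemma eventually (h : IsPureLikeMixture γ) : ∀ᶠ γ' in mixtureNhds γ, IsPureLikeMixture γ' := by
  filter_upwards [eventually_gammaDecay γ, h.mixed.eventually h.decay,
    h.decay.tendsto_endpointValues.eventually h.endpoint.eventually_isPureLike] with γ' hγ' hm hJ
  refine ⟨hγ', hm, ?_⟩
  rw [PureLike, Gfun_eq_pureGap]
  exact hJ.pureGap_pos

lemma eventually_excess_neg_of_abs_lt_one (h : IsPureLikeMixture γ) {r : ℝ} (hr : |r| < 1)
    (hneg : (pairValues γ r).excess < 0) :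
    ∀ᶠ q in mixtureNhds γ ×ˢ nhdsWithin r (Ioo (-1) 1), (pairValues q.1 q.2).excess < 0 := by
  have hcont := (h.isPosDef hr).continuousAt_excess h.endpoint (h.decay.abs_reducedDeriv_le 1 hr.le)
  have hlim := (h.decay.tendsto_pairValues (abs_le.mp hr.le)).mono_left
    (prod_mono_right _ (nhdsWithin_mono r Ioo_subset_Icc_self))
  exact hlim.eventually (hcont.eventually_lt_const hneg)

lemma eventually_le_gradRatioBound (h : IsPureLikeMixture γ) {e : ℝ} (he : |e| = 1) :
    ∀ᶠ q in mixtureNhds γ ×ˢ nhdsWithin e (Ioo (-1) 1),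
      (endpointValues q.1).v₂ * (endpointValues q.1).edgeRatio ≤ gradRatioBound q.1 |q.2| := by
  have hlt : (endpointValues γ).v₂ * (endpointValues γ).edgeRatio < reducedDeriv γ 2 1 :=
    mul_lt_of_lt_one_right h.endpoint.v₂_pos h.endpoint.edgeRatio_lt_one
  have hedge : ContinuousAt (fun J : EndpointValues => J.v₂ * J.edgeRatio) (endpointValues γ) :=
    EndpointValues.continuous_v₂.continuousAt.mul h.endpoint.continuousAt_edgeRatio
  have hleft := (hedge.tendsto.comp h.decay.tendsto_endpointValues).comp
    (tendsto_fst (g := nhdsWithin e (Ioo (-1) 1)))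
  have hright := (h.decay.tendsto_gradRatioBound h.endpoint.v₁_pos.ne').comp
    (tendsto_id.prodMap (tendsto_abs_nhdsWithin_one he))
  filter_upwards [hleft.eventually_lt hright hlt] with q hq
  exact hq.le

lemma eventually_excess_neg_of_abs_eq_one (h : IsPureLikeMixture γ) {e : ℝ} (he : |e| = 1) :
    ∀ᶠ q in mixtureNhds γ ×ˢ nhdsWithin e (Ioo (-1) 1), (pairValues q.1 q.2).excess < 0 := by
  filter_upwards [h.eventually_le_gradRatioBound he, tendsto_fst.eventually h.eventually,
    tendsto_snd.eventually (eventually_abs_lt_one e)] with q hle h' hr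
  have hneg := h'.Psi0_neg_of_le_gradRatioBound hr hle
  rw [h'.Psi0_eq_sq_mul_excess hr] at hneg
  exact neg_of_mul_neg_right hneg (sq_nonneg q.2)

theorem eventually_forall_excess_neg (h : IsPureLikeMixture γ)
    (hneg : ∀ r ∈ Ioo (-1) 1, (pairValues γ r).excess < 0) :
    ∀ᶠ γ' in mixtureNhds γ, ∀ r ∈ Ioo (-1) 1, (pairValues γ' r).excess < 0 := by
  refine eventually_forall_mem_of_isCompact (K := Icc (-1) 1) isCompact_Icc Ioo_subset_Icc_self
    fun r hr => ?_
  rcases (abs_le.mpr hr).lt_or_eq with hlt | heq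
  · exact h.eventually_excess_neg_of_abs_lt_one hlt (hneg r (abs_lt.mp hlt))
  · exact h.eventually_excess_neg_of_abs_eq_one heq

end IsPureLikeMixture

/-- Condition M is an open condition: if a non-pure mixture ν
satisfies Condition M, then so does every mixture ν̄ close enough to ν in ‖·‖. -/
theorem conditionM_open
    (γ : ℕ → ℝ) (hγ : GammaDecay γ) (hM : ConditionM γ) :
    ∃ δ > (0 : ℝ), ∀ γ' : ℕ → ℝ, GammaDecay γ' → mixDist γ' γ < δ → ConditionM γ' := by
  have hpl : IsPureLikeMixture γ := ⟨hγ, hM.1, hM.2.1⟩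
  rw [← eventually_mixtureNhds_iff]
  filter_upwards [hpl.eventually, hpl.eventually_forall_excess_neg (hpl.conditionM_iff.mp hM)]
    with γ' hpl' hneg
  exact hpl'.conditionM_iff.mpr hneg

end SpinGlass
end
end

section
/- (Lipschitz continuity of the free energy in the disorder) Fix N ∈ ℕ, β > 0, p_0 ≥ 2 and nonnegative reals γ_2, …, γ_{p_0}, and set ν(x) = Σ_{p=2}^{p_0} γ_p² x^p. Then the map J ↦ F_{N,β}(J) = (1/N)·log ∫_{S^{N-1}(√N)} exp(−β·H_N(J,σ)) dσ, viewed as a function of the array J ∈ ℝ^M equipped with the Euclidean norm, is Lipschitz continuous with Lipschitz constant β·√(ν(1)/N). -/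
open MeasureTheory Real Filter Set

noncomputable section

namespace SpinGlass

/-- The uniform probability measure on the unit sphere of ℝᴺ. -/
def unifSphere (N : ℕ) : Measure (Metric.sphere (0 : EuclideanSpace ℝ (Fin N)) 1) :=
  ((volume : Measure (EuclideanSpace ℝ (Fin N))).toSphere Set.univ)⁻¹ •
    (volume : Measure (EuclideanSpace ℝ (Fin N))).toSphere

/-- Index type for the disorder array `J` of a finite mixture:
a degree `p` with `2 ≤ p ≤ p0` and a `p`-tuple of spin indices. -/
abbrev FinIdx (p0 N : ℕ) : Type :=
  (p : {x : ℕ // x ∈ Finset.Icc 2 p0}) × (Fin (p : ℕ) → Fin N)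

/-- The finite-mixture Hamiltonian `H_N(J,σ)` as a function of the disorder array
`J ∈ ℝ^M` and the spin configuration `σ`. -/
def HamFin (p0 N : ℕ) (γ : ℕ → ℝ) (J : EuclideanSpace ℝ (FinIdx p0 N))
    (σ : EuclideanSpace ℝ (Fin N)) : ℝ :=
  ∑ p : {x : ℕ // x ∈ Finset.Icc 2 p0},
    γ (p : ℕ) * (Real.sqrt ((N : ℝ) ^ ((p : ℕ) - 1)))⁻¹ *
      ∑ i : Fin (p : ℕ) → Fin N, J ⟨p, i⟩ * ∏ k, σ (i k)

/-- The free energy `F_{N,β}(J)` (in unit-sphere coordinates `σ = √N · u`). -/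
def FreeEnergyFin (p0 N : ℕ) (γ : ℕ → ℝ) (β : ℝ)
    (J : EuclideanSpace ℝ (FinIdx p0 N)) : ℝ :=
  (1 / N : ℝ) * Real.log (∫ u : Metric.sphere (0 : EuclideanSpace ℝ (Fin N)) 1,
    Real.exp (-β * HamFin p0 N γ J
      (Real.sqrt N • (u : EuclideanSpace ℝ (Fin N)))) ∂(unifSphere N))

/-!
The Hamiltonian is linear in the disorder, `H_N(J, σ) = ⟪J, Φ(σ)⟫`, and `Φ` satisfies the covariance
identity `⟪Φ(σ), Φ(τ)⟫ = N ν(⟪σ, τ⟫ / N)`. Hence `‖Φ(σ)‖ ≤ √(N ν(1))` whenever `‖σ‖ ≤ √N`. Moving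
`J` by `h` therefore moves the exponent `-β H_N` by at most `|β| √(N ν(1)) ‖h‖`, uniformly in `σ`,
and so moves the logarithm of the integral by at most as much; dividing by `N` gives the constant.
-/

open ProbabilityTheory
open scoped RealInnerProductSpace

section LogLaplace

variable {Ω : Type*} [MeasurableSpace Ω] {μ : Measure Ω}

theorem log_integral_exp_le_add_const [NeZero μ] {f g : Ω → ℝ} {c : ℝ}
    (hf : Integrable (fun ω ↦ exp (f ω)) μ) (hg : Integrable (fun ω ↦ exp (g ω)) μ)
    (hfg : ∀ᵐ ω ∂μ, f ω ≤ g ω + c) :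
    log (∫ ω, exp (f ω) ∂μ) ≤ log (∫ ω, exp (g ω) ∂μ) + c := by
  have hle : ∫ ω, exp (f ω) ∂μ ≤ (∫ ω, exp (g ω) ∂μ) * exp c := by
    rw [← integral_mul_const]
    refine integral_mono_ae hf (hg.mul_const _) ?_
    filter_upwards [hfg] with ω hω
    rwa [← exp_add, exp_le_exp]
  calc log (∫ ω, exp (f ω) ∂μ)
      ≤ log ((∫ ω, exp (g ω) ∂μ) * exp c) := log_le_log (integral_exp_pos hf) hle
    _ = log (∫ ω, exp (g ω) ∂μ) + c := by
      rw [log_mul (integral_exp_pos hg).ne' (exp_pos c).ne', log_exp]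

variable {E : Type*} [NormedAddCommGroup E] [InnerProductSpace ℝ E] {V : Ω → E} {K : ℝ}

theorem integrable_exp_mul_inner_of_norm_le [IsFiniteMeasure μ] (hV : AEStronglyMeasurable V μ)
    (hVK : ∀ᵐ ω ∂μ, ‖V ω‖ ≤ K) (t : ℝ) (x : E) :
    Integrable (fun ω ↦ exp (t * ⟪x, V ω⟫)) μ := by
  refine integrable_exp_mul_of_mem_Icc (a := -(‖x‖ * K)) (b := ‖x‖ * K)
    (aestronglyMeasurable_const.inner hV).aemeasurable ?_
  filter_upwards [hVK] with ω hω
  exact abs_le.1 ((abs_real_inner_le_norm x (V ω)).trans (by gcongr))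

theorem lipschitzWith_cgf_inner_of_norm_le [IsFiniteMeasure μ] [NeZero μ]
    (hV : AEStronglyMeasurable V μ) (hVK : ∀ᵐ ω ∂μ, ‖V ω‖ ≤ K) (t : ℝ) :
    LipschitzWith (toNNReal (|t| * K)) fun x : E ↦ cgf (fun ω ↦ ⟪x, V ω⟫) μ t := by
  refine LipschitzWith.of_le_add_mul' _ fun x y ↦ log_integral_exp_le_add_const
    (integrable_exp_mul_inner_of_norm_le hV hVK t x)
    (integrable_exp_mul_inner_of_norm_le hV hVK t y) ?_
  filter_upwards [hVK] with ω hω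
  rw [← sub_le_iff_le_add']
  calc t * ⟪x, V ω⟫ - t * ⟪y, V ω⟫
      = t * ⟪x - y, V ω⟫ := by rw [inner_sub_left, mul_sub]
    _ ≤ |t| * |⟪x - y, V ω⟫| := (le_abs_self _).trans (abs_mul _ _).le
    _ ≤ |t| * (‖x - y‖ * K) := by
      gcongr
      exact (abs_real_inner_le_norm _ _).trans (by gcongr)
    _ = |t| * K * dist x y := by rw [dist_eq_norm]; ring

end LogLaplace

section Covariance

/-- The mixture polynomial `ν(x) = ∑_{p=2}^{p0} γ_p² xᵖ`, whose values give the covariance of the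
Hamiltonian under standard Gaussian disorder. -/
def mixture (p0 : ℕ) (γ : ℕ → ℝ) (x : ℝ) : ℝ :=
  ∑ p ∈ Finset.Icc 2 p0, γ p ^ 2 * x ^ p

/-- The vector `Φ(σ)` of all monomials `γ_p N^{-(p-1)/2} σ_{i_1} ⋯ σ_{i_p}`; the Hamiltonian is the
inner product of the disorder with it. -/
def monomialVector (p0 N : ℕ) (γ : ℕ → ℝ) (σ : EuclideanSpace ℝ (Fin N)) :
    EuclideanSpace ℝ (FinIdx p0 N) :=
  WithLp.toLp 2 fun x ↦ γ x.1 * (√((N : ℝ) ^ ((x.1 : ℕ) - 1)))⁻¹ * ∏ k, σ (x.2 k)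

variable {p0 N : ℕ} {γ : ℕ → ℝ}

theorem mixture_one : mixture p0 γ 1 = ∑ p ∈ Finset.Icc 2 p0, γ p ^ 2 := by
  simp [mixture]

theorem monotoneOn_mixture : MonotoneOn (mixture p0 γ) (Ici 0) := by
  intro x (hx : 0 ≤ x) y _ hxy
  unfold mixture
  gcongr

theorem hamFin_eq_inner (J : EuclideanSpace ℝ (FinIdx p0 N)) (σ : EuclideanSpace ℝ (Fin N)) :
    HamFin p0 N γ J σ = ⟪J, monomialVector p0 N γ σ⟫ := by
  simp only [HamFin, monomialVector, PiLp.inner_apply, Real.inner_apply, Fintype.sum_sigma,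
    Finset.mul_sum]
  exact Finset.sum_congr rfl fun p _ ↦ Finset.sum_congr rfl fun i _ ↦ by ring

theorem continuous_monomialVector : Continuous (monomialVector p0 N γ) := by
  unfold monomialVector
  fun_prop

theorem sum_prod_mul_prod_eq_inner_pow {ι : Type*} [Fintype ι] (p : ℕ) (σ τ : EuclideanSpace ℝ ι) :
    ∑ i : Fin p → ι, (∏ k, σ (i k)) * ∏ k, τ (i k) = ⟪σ, τ⟫ ^ p := by
  classical
  simp only [PiLp.inner_apply, Real.inner_apply, Fintype.sum_pow, Finset.prod_mul_distrib]

theorem inner_monomialVector (hN : 0 < N) (σ τ : EuclideanSpace ℝ (Fin N)) :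
    ⟪monomialVector p0 N γ σ, monomialVector p0 N γ τ⟫ = N * mixture p0 γ (⟪σ, τ⟫ / N) := by
  rw [PiLp.inner_apply, Fintype.sum_sigma, mixture, Finset.mul_sum,
    ← Finset.sum_coe_sort (Finset.Icc 2 p0)]
  refine Finset.sum_congr rfl fun p _ ↦ ?_
  have hp : (p : ℕ) ≠ 0 := by grind
  calc ∑ i, ⟪monomialVector p0 N γ σ ⟨p, i⟩, monomialVector p0 N γ τ ⟨p, i⟩⟫
      = γ p ^ 2 * (√((N : ℝ) ^ ((p : ℕ) - 1)) ^ 2)⁻¹ *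
          ∑ i : Fin p → Fin N, (∏ k, σ (i k)) * ∏ k, τ (i k) := by
        simp only [monomialVector, Real.inner_apply, Finset.mul_sum]
        exact Finset.sum_congr rfl fun i _ ↦ by ring
    _ = γ p ^ 2 * ((N : ℝ) ^ ((p : ℕ) - 1))⁻¹ * ⟪σ, τ⟫ ^ (p : ℕ) := by
        rw [sum_prod_mul_prod_eq_inner_pow, sq_sqrt (by positivity)]
    _ = N * (γ p ^ 2 * (⟪σ, τ⟫ / N) ^ (p : ℕ)) := by
        rw [div_pow, ← pow_sub_one_mul hp (N : ℝ)]
        field_simp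

theorem norm_monomialVector_le (hN : 0 < N) {σ : EuclideanSpace ℝ (Fin N)} (hσ : ‖σ‖ ≤ √N) :
    ‖monomialVector p0 N γ σ‖ ≤ √(N * mixture p0 γ 1) := by
  have hσN : ‖σ‖ ^ 2 / N ≤ 1 :=
    div_le_one_of_le₀ ((le_sqrt (norm_nonneg σ) N.cast_nonneg).1 hσ) N.cast_nonneg
  refine le_sqrt_of_sq_le ?_
  rw [← real_inner_self_eq_norm_sq, inner_monomialVector hN, real_inner_self_eq_norm_sq]
  gcongr
  exact monotoneOn_mixture (mem_Ici.2 (by positivity)) (mem_Ici.2 zero_le_one) hσN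

end Covariance

theorem isProbabilityMeasure_unifSphere {N : ℕ} (hN : 0 < N) :
    IsProbabilityMeasure (unifSphere N) := by
  have : NeZero N := ⟨hN.ne'⟩
  have : NeZero (volume : Measure (EuclideanSpace ℝ (Fin N))).toSphere :=
    ⟨Measure.toSphere_ne_zero _⟩
  exact isProbabilityMeasureSMul

theorem free_energy_lipschitz_in_disorder_general {Ω : Type*} [MeasurableSpace Ω] {μ : Measure Ω}
    [IsFiniteMeasure μ] [NeZero μ] {N : ℕ} (hN : 0 < N) (β : ℝ) (p0 : ℕ) (γ : ℕ → ℝ)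
    {σ : Ω → EuclideanSpace ℝ (Fin N)} (hσ : AEStronglyMeasurable σ μ)
    (hσN : ∀ᵐ ω ∂μ, ‖σ ω‖ ≤ √N) :
    LipschitzWith (toNNReal (|β| * √((∑ p ∈ Finset.Icc 2 p0, γ p ^ 2) / N)))
      fun J ↦ (1 / N : ℝ) * log (∫ ω, exp (-β * HamFin p0 N γ J (σ ω)) ∂μ) := by
  have hcgf := lipschitzWith_cgf_inner_of_norm_le
    (continuous_monomialVector (p0 := p0) (γ := γ).comp_aestronglyMeasurable hσ)
    (hσN.mono fun ω hω ↦ norm_monomialVector_le hN hω) (-β)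
  have hscale : ‖(1 / N : ℝ)‖₊ * toNNReal (|-β| * √(N * mixture p0 γ 1)) =
      toNNReal (|β| * √(mixture p0 γ 1 / N)) := by
    rw [← toNNReal_eq_nnnorm_of_nonneg (by positivity), ← toNNReal_mul (by positivity), abs_neg]
    have hdiv : mixture p0 γ 1 / N = N * mixture p0 γ 1 / (N : ℝ) ^ 2 := by field_simp
    rw [hdiv, sqrt_div' _ (by positivity), sqrt_sq N.cast_nonneg]
    ring_nf
  simpa only [hamFin_eq_inner, ← mixture_one, ← hscale] using!
    (lipschitzWith_smul (1 / N : ℝ)).comp hcgf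

/-- (Lipschitz continuity of the free energy in the disorder.)
For a finite mixture ν(x) = Σ_{p=2}^{p0} γ_p² xᵖ, the map J ↦ F_{N,β}(J) is
Lipschitz with constant β·√(ν(1)/N) w.r.t. the Euclidean norm on the disorder. -/
theorem free_energy_lipschitz_in_disorder
    (N : ℕ) (hN : 0 < N) (β : ℝ) (hβ : 0 < β) (p0 : ℕ) (hp0 : 2 ≤ p0)
    (γ : ℕ → ℝ) (hγ : ∀ p, 0 ≤ γ p) :
    LipschitzWith
      (Real.toNNReal (β * Real.sqrt ((∑ p ∈ Finset.Icc 2 p0, γ p ^ 2) / N)))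
      (FreeEnergyFin p0 N γ β) := by
  have := isProbabilityMeasure_unifSphere hN
  simpa only [abs_of_pos hβ] using! free_energy_lipschitz_in_disorder_general (μ := unifSphere N)
    hN β p0 γ (σ := fun u ↦ √N • u.1) (by fun_prop) (by simp [norm_smul, abs_of_nonneg])

end SpinGlass
end
end
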